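/- For any permutation w, the Stanley symmetric function satisfies S_w(X) = Σ s_{Des(ρ)}(X), where the sum is over reduced words ρ ∈ R(w) whose descent tableau 𝔻(ρ) is an increasing Young tableau of partition shape (for such ρ, Des(ρ) is a partition). -/

import Mathlib

open List

namespace EG

/-! ## Words, permutations, and reduced words.

A word is a list of positive natural numbers `(ρ_ℓ, …, ρ_1)`, read left to right,
representing the product of simple transpositions `s_{ρ_ℓ} ⋯ s_{ρ_1}`. -/

/-- The permutation of `ℕ` represented by a word. -/
def toPerm (ρ : List ℕ) : Equiv.Perm ℕ :=
  (ρ.map fun i => Equiv.swap i (i + 1)).prod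

/-- `ρ` is a reduced word: its letters are positive, and no shorter word represents
the same permutation. -/
def IsReducedWord (ρ : List ℕ) : Prop :=
  (∀ i ∈ ρ, 1 ≤ i) ∧
    ∀ σ : List ℕ, (∀ i ∈ σ, 1 ≤ i) → toPerm σ = toPerm ρ → ρ.length ≤ σ.length

/-- `ρ` is a reduced word for the permutation `w`. -/
def ReducedWordFor (ρ : List ℕ) (w : Equiv.Perm ℕ) : Prop :=
  IsReducedWord ρ ∧ toPerm ρ = w

/-! ## Elementary Coxeter–Knuth relations. -/

/-- The elementary Coxeter–Knuth move on a consecutive triple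
`(a, b, c) = (ρ_{i+1}, ρ_i, ρ_{i−1})`. -/
def ckTriple (a b c : ℕ) : ℕ × ℕ × ℕ :=
  if a = c then (b, a, b)
  else if (c > a ∧ a > b) ∨ (c < a ∧ a < b) then (a, c, b)
  else if (a > c ∧ c > b) ∨ (a < c ∧ c < b) then (b, a, c)
  else (a, b, c)

/-- The elementary Coxeter–Knuth relation `𝔡_i`, acting on the letters
`ρ_{i+1} ρ_i ρ_{i−1}` of a word `ρ = (ρ_ℓ, …, ρ_1)` (indexed from the right). -/
def ckMove (i : ℕ) (ρ : List ℕ) : List ℕ :=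
  if 2 ≤ i ∧ i + 1 ≤ ρ.length then
    let p := ρ.length - i - 1
    let t := ckTriple (ρ.getD p 0) (ρ.getD (p + 1) 0) (ρ.getD (p + 2) 0)
    ((ρ.set p t.1).set (p + 1) t.2.1).set (p + 2) t.2.2
  else ρ

/-- Two words are Coxeter–Knuth equivalent if one is obtained from the other by a
finite sequence of elementary Coxeter–Knuth relations. -/
def CKEquiv (ρ σ : List ℕ) : Prop :=
  ∃ ms : List ℕ, σ = ms.foldl (fun w i => ckMove i w) ρ

/-! ## Run decompositions and descent tableaux. -/

/-- Split a list into maximal blocks, breaking between consecutive letters `a`, `b`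
whenever `brk a b` holds. -/
def splitWhen (brk : ℕ → ℕ → Bool) : List ℕ → List (List ℕ)
  | [] => []
  | [a] => [[a]]
  | a :: b :: rest =>
    match splitWhen brk (b :: rest) with
    | r :: rs => if brk a b then [a] :: r :: rs else (a :: r) :: rs
    | [] => [[a]]

/-- The run decomposition of a word into maximal strictly increasing runs, listed
left to right (so the list is `[ρ⁽ᵏ⁾, …, ρ⁽¹⁾]`, with `ρ⁽¹⁾` the final run). -/
def runs (ρ : List ℕ) : List (List ℕ) := splitWhen (fun a b => decide (b ≤ a)) ρ

/-- The rows of the descent tableau `𝔻(ρ)`, listed bottom to top: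
`[ρ⁽¹⁾, …, ρ⁽ᵏ⁾]`. -/
def rowsOf (ρ : List ℕ) : List (List ℕ) := (runs ρ).reverse

/-- The row reading word of a tableau whose rows are listed bottom to top:
read rows left to right, starting with the top row. -/
def wordOf (R : List (List ℕ)) : List ℕ := R.reverse.flatten

/-- The descent composition `Des(ρ) = (|ρ⁽¹⁾|, …, |ρ⁽ᵏ⁾|)`. -/
def DesComp (ρ : List ℕ) : List ℕ := (rowsOf ρ).map List.length

/-- A list of rows (bottom to top) is an increasing Young tableau of partition shape:
rows strictly increase left to right, shape is a partition, and columns strictly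
increase bottom to top. -/
def IsIncreasingYoungRows (R : List (List ℕ)) : Prop :=
  (∀ r ∈ R, r.Chain' (· < ·)) ∧
    R.Chain' (fun lo hi => hi.length ≤ lo.length ∧
      ∀ j < hi.length, lo.getD j 0 < hi.getD j 0)

/-! ## The drop map on a pair of increasing rows. -/

/-- Increment the first `n` letters of a list by `1`. -/
def incFirst : ℕ → List ℕ → List ℕ
  | 0, l => l
  | _ + 1, [] => []
  | n + 1, a :: l => (a + 1) :: incFirst n l

/-- Decrement the first `n` letters of a list by `1`. -/
def decFirst : ℕ → List ℕ → List ℕ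
  | 0, l => l
  | _ + 1, [] => []
  | n + 1, a :: l => (a - 1) :: decFirst n l

/-- `bCount t1 i [s_i, s_{i+1}, …]` is the largest `b` with `t1 = s_j + j` for all
`i ≤ j < i + b`. -/
def bCount (t1 : ℕ) : ℕ → List ℕ → ℕ
  | _, [] => 0
  | i, s :: rest => if t1 = s + i then bCount t1 (i + 1) rest + 1 else 0

/-- Index of the first failure `τ_j ≤ σ_j` in the drop alignment of `σ` below `τ`. -/
def failIdx (τ σ : List ℕ) : Option ℕ :=
  (τ.zip σ).findIdx? (fun p => decide (p.1 ≤ p.2))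

/-- Fueled computation of the drop of the row `σ` below the row `τ`, returning the
new pair (top row, bottom row). -/
def dropPairAux : ℕ → List ℕ → List ℕ → List ℕ × List ℕ
  | 0, τ, σ => (τ, σ)
  | fuel + 1, τ, σ =>
    match failIdx τ σ with
    | none =>
      if σ.length < τ.length then (τ.take σ.length, σ ++ τ.drop σ.length)
      else (τ, σ)
    | some j =>
      let x := τ.getD j 0
      let τr := τ.drop (j + 1)
      let σr := σ.drop j
      let res := dropPairAux fuel τr σr
      let l1 := (failIdx τr σr).getD τr.length
      let b := if l1 = 0 then 0
               else if x + 1 = τr.headD 0 then bCount (τr.headD 0) 1 (σr.take l1) else 0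
      (τ.take j ++ res.1, σ.take j ++ x :: incFirst b res.2)

/-- The drop of the row `σ` below the row `τ`: the pair (new top row, new bottom row). -/
def dropPair (τ σ : List ℕ) : List ℕ × List ℕ := dropPairAux (τ.length + 1) τ σ

/-- The word `drop(τσ)`. -/
def dropW (τ σ : List ℕ) : List ℕ := (dropPair τ σ).1 ++ (dropPair τ σ).2

/-- Apply `drop` to rows `i` and `i+1` (1-indexed from the bottom) of a list of rows. -/
def dropAt : ℕ → List (List ℕ) → List (List ℕ)
  | 1, σr :: τr :: rest => (dropPair τr σr).2 :: (dropPair τr σr).1 :: rest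
  | n + 2, r :: R => r :: dropAt (n + 1) R
  | _, R => R

/-- The map `drop_i` on words: replace the runs `ρ⁽ⁱ⁺¹⁾ ρ⁽ⁱ⁾` of the run
decomposition by `drop(ρ⁽ⁱ⁺¹⁾ ρ⁽ⁱ⁾)`. -/
def dropWordAt (i : ℕ) (ρ : List ℕ) : List ℕ := wordOf (dropAt i (rowsOf ρ))

/-- One sweep of all the maps `drop_i`. -/
def sweepDrop (ρ : List ℕ) : List ℕ :=
  (List.range (runs ρ).length).foldl (fun w i => dropWordAt (i + 1) w) ρ

/-- The drop `drop(ρ)` of a word: repeatedly apply the maps `drop_i` until reaching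
the fixed point (an increasing Young tableau). -/
def dropFull (ρ : List ℕ) : List ℕ := sweepDrop^[ρ.length * ρ.length + 1] ρ

/-! ## The lift map on a pair of increasing rows. -/

/-- `bCount2 x i τblk σblk` is the largest `b` with `τ_j = σ_j = x + j` for all
`i ≤ j < i + b`. -/
def bCount2 (x : ℕ) : ℕ → List ℕ → List ℕ → ℕ
  | i, t :: ts, s :: ss =>
      if t = x + i ∧ s = x + i then bCount2 x (i + 1) ts ss + 1 else 0
  | _, _, _ => 0

/-- Index of the first failure (from the right) in the lift alignment of `τ` above
`σ`: here both rows are given reversed. -/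
def liftFailIdx (τR σR : List ℕ) : Option ℕ :=
  (τR.zip σR).findIdx? (fun p => decide (p.1 < p.2))

/-- Fueled computation of the lift of the row `τ` above the row `σ`, on reversed
rows; returns the new (top row, bottom row), reversed. -/
def liftPairAuxR : ℕ → List ℕ → List ℕ → List ℕ × List ℕ
  | 0, τR, σR => (τR, σR)
  | fuel + 1, τR, σR =>
    match liftFailIdx τR σR with
    | none => (τR, σR)
    | some j =>
      let x := σR.getD j 0
      let τr := τR.drop j
      let σr := σR.drop (j + 1)
      let res := liftPairAuxR fuel τr σr
      let τblk := (τR.take j).reverse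
      let σblk := (σR.take j).reverse
      let b := if σblk.headD 0 = x + 1 then bCount2 x 1 τblk σblk else 0
      (τR.take j ++ x :: res.1, (decFirst b σblk).reverse ++ res.2)

/-- Check that the lift alignment leaves no unmatched letters of `σ` (no letter of
`σ` other than the `x_j`'s lacks a letter of `τ` above it); when some letter is
left over, the lift acts trivially. -/
def liftOkAux : ℕ → List ℕ → List ℕ → Bool
  | 0, _, _ => true
  | fuel + 1, τR, σR =>
    match liftFailIdx τR σR with
    | none => σR.length ≤ τR.length
    | some j => liftOkAux fuel (τR.drop j) (σR.drop (j + 1))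

/-- The lift of the row `τ` above the row `σ`: the pair (new top row, new bottom row). -/
def liftPair (τ σ : List ℕ) : List ℕ × List ℕ :=
  if liftOkAux (σ.length + 1) τ.reverse σ.reverse then
    let r := liftPairAuxR (σ.length + 1) τ.reverse σ.reverse
    (r.1.reverse, r.2.reverse)
  else (τ, σ)

/-- The word `lift(τσ)`. -/
def liftW (τ σ : List ℕ) : List ℕ := (liftPair τ σ).1 ++ (liftPair τ σ).2

/-- Apply `lift` to rows `i` and `i+1` (1-indexed from the bottom) of a list of rows. -/
def liftAt : ℕ → List (List ℕ) → List (List ℕ)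
  | 1, σr :: τr :: rest => (liftPair τr σr).2 :: (liftPair τr σr).1 :: rest
  | n + 2, r :: R => r :: liftAt (n + 1) R
  | _, R => R

/-- The lifting sequence `lift_{[i,j]} = lift_j ∘ ⋯ ∘ lift_i`. -/
def liftSeq (i j : ℕ) (T : List (List ℕ)) : List (List ℕ) :=
  (List.range' i (j + 1 - i)).foldl (fun t k => liftAt k t) T

/-- Fueled check that `lift_i, lift_{i+1}, …` all act faithfully, for `n` steps. -/
def faithfulAux : ℕ → ℕ → List (List ℕ) → Bool
  | 0, _, _ => false
  | n + 1, i, T =>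
    let T' := liftAt i T
    if T' = T then false
    else if n = 0 then true
    else faithfulAux n (i + 1) T'

/-- The lifting sequence `lift_{[i,j]}` acts faithfully on `T`. -/
def faithfulSeq (i j : ℕ) (T : List (List ℕ)) : Bool :=
  if i ≤ j then faithfulAux (j + 1 - i) i T else false

/-- Find the canonical move: the maximal `j` admitting some `i ≤ j` with
`lift_{[i,j]}` faithful, together with the minimal such `i`. -/
def findMove (T : List (List ℕ)) : Option (ℕ × ℕ) :=
  (List.range (T.length + 1)).reverse.findSome? (fun j =>
    ((List.range' 1 j).find? (fun i => faithfulSeq i j T)).map (fun i => (i, j)))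

/-- Fueled canonical lifting loop. -/
def liftCanonAux : ℕ → List (List ℕ) → List (List ℕ)
  | 0, T => T
  | fuel + 1, T =>
    match findMove T with
    | none => T
    | some ij => liftCanonAux fuel (liftSeq ij.1 ij.2 T)

/-- The canonical lifting algorithm applied to a tableau (rows bottom to top). -/
def liftCanon (T : List (List ℕ)) : List (List ℕ) :=
  liftCanonAux (T.flatten.length * T.length + 1) T

/-- The word `lift(ρ)`: the row reading word of the canonical lift of `𝔻(ρ)`. -/
def liftWord (ρ : List ℕ) : List ℕ := wordOf (liftCanon (rowsOf ρ))

/-! ## Weak descent compositions. -/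

/-- From the list of minima `[r_k, …, r_1]` of the runs (topmost first), compute
`[r̂_k, …, r̂_1]` where `r̂_k = r_k` and `r̂_i = min (r_i, r̂_{i+1} − 1)`. -/
def hatMins (L : List ℤ) : List ℤ :=
  (L.foldl (fun (acc : List ℤ × Option ℤ) r =>
    let v := match acc.2 with
      | none => r
      | some p => min r (p - 1)
    (acc.1 ++ [v], some v)) ([], none)).1

/-- Build the weak composition with value `lens_i` in position `hs_i` and `0`
elsewhere. -/
def buildWeakComp (hs : List ℤ) (lens : List ℕ) : List ℕ :=
  (List.range (hs.headD 0).toNat).map (fun p =>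
    match (hs.zip lens).find? (fun q => decide (q.1 = (p : ℤ) + 1)) with
    | some q => q.2
    | none => 0)

/-- The weak descent composition determined by the minima and lengths of the runs
(topmost run first); `none` means virtual. -/
def desFromBlocks (mins : List ℤ) (lens : List ℕ) : Option (List ℕ) :=
  let hs := hatMins mins
  if hs = [] then some []
  else if hs.getLastD 0 ≤ 0 then none
  else some (buildWeakComp hs lens)

/-- The weak descent composition `des(ρ)` of a word; `none` means `ρ` is virtual. -/
def desWord (ρ : List ℕ) : Option (List ℕ) :=
  desFromBlocks ((runs ρ).map (fun r => ((r.headD 0 : ℕ) : ℤ)))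
    ((runs ρ).map List.length)

/-- Prefix-sum dominance of weak compositions: `domLe a b` means
`a_1 + ⋯ + a_k ≤ b_1 + ⋯ + b_k` for all `k` (i.e. `b ≥ a`). -/
def domLe (a b : List ℕ) : Prop := ∀ k, ((a.take k).sum ≤ (b.take k).sum)

/-- A reduced word is Yamanouchi if it is non-virtual and its weak descent
composition is dominated by that of every non-virtual Coxeter–Knuth equivalent word. -/
def IsYam (ρ : List ℕ) : Prop :=
  IsReducedWord ρ ∧ ∃ d, desWord ρ = some d ∧
    ∀ σ e, CKEquiv ρ σ → desWord σ = some e → domLe d e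

/-! ## Quasisymmetric functions, slide polynomials, and generating functions.

We model formal power series in variables `x_1, x_2, …` (indexed by `ℕ`, with
variable `i` standing for `x_{i+1}`) as functions `(ℕ →₀ ℕ) → ℤ` recording
coefficients of monomials. -/

/-- `β` refines `α`: `β` splits into consecutive blocks with sums the parts of `α`. -/
def Refines (β α : List ℕ) : Prop :=
  ∃ blocks : List (List ℕ), blocks.flatten = β ∧
    List.Forall₂ (fun blk a => blk.sum = a) blocks α

/-- The flattening of a weak composition given as a finitely supported exponent
vector: the list of its nonzero values, in order. -/
def flatOf (b : ℕ →₀ ℕ) : List ℕ :=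
  ((List.range (b.support.sup id + 1)).map b).filter (fun x => decide (x ≠ 0))

open Classical in
/-- The fundamental quasisymmetric function `F_α`. -/
noncomputable def Fqs (α : List ℕ) : (ℕ →₀ ℕ) → ℤ :=
  fun b => if Refines (flatOf b) α then 1 else 0

open Classical in
/-- The fundamental slide polynomial `𝔉_a` of a weak composition `a`. -/
noncomputable def FSlide (a : List ℕ) : (ℕ →₀ ℕ) → ℤ :=
  fun b =>
    if (∀ i, a.length ≤ i → b i = 0) ∧
       (∀ k, (a.take k).sum ≤ ∑ i ∈ Finset.range k, b i) ∧
       Refines (flatOf b) (a.filter (fun x => decide (x ≠ 0))) then 1 else 0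

/-- `𝔉` extended to virtual indices by `𝔉_∅ = 0`. -/
noncomputable def FSlideO : Option (List ℕ) → (ℕ →₀ ℕ) → ℤ
  | none => 0
  | some a => FSlide a

/-- The Stanley symmetric function `S_w`. -/
noncomputable def StanleySym (w : Equiv.Perm ℕ) : (ℕ →₀ ℕ) → ℤ :=
  ∑ᶠ ρ ∈ {ρ : List ℕ | ReducedWordFor ρ w}, Fqs (DesComp ρ)

/-- The Schubert polynomial `𝔖_w`. -/
noncomputable def Schubert (w : Equiv.Perm ℕ) : (ℕ →₀ ℕ) → ℤ :=
  ∑ᶠ ρ ∈ {ρ : List ℕ | ReducedWordFor ρ w}, FSlideO (desWord ρ)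

/-! ## Standard Young tableaux and Schur functions. -/

/-- The (bottom-to-top) row index of the row of `T` containing the entry `e`. -/
def rowOf (T : List (List ℕ)) (e : ℕ) : ℕ := T.findIdx (fun r => r.contains e)

/-- The column index of the entry `e` in `T`. -/
def colOf (T : List (List ℕ)) (e : ℕ) : ℕ :=
  (T.getD (rowOf T e) []).findIdx (fun z => z == e)

/-- `T` (rows listed bottom to top) is a standard Young tableau. -/
def IsSYT (T : List (List ℕ)) : Prop :=
  (∀ r ∈ T, r.Chain' (· < ·)) ∧
    T.Chain' (fun lo hi => hi.length ≤ lo.length ∧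
      ∀ j < hi.length, lo.getD j 0 < hi.getD j 0) ∧
    [] ∉ T ∧
    T.flatten.Perm (List.range' 1 T.flatten.length)

/-- The descent composition of a standard Young tableau: `i` is a descent when
`i+1` lies weakly left of `i`. -/
def sytDes (T : List (List ℕ)) : List ℕ :=
  (splitWhen (fun a _ => decide (colOf T (a + 1) ≤ colOf T a))
    (List.range' 1 T.flatten.length)).map List.length

/-- The Schur function `s_λ`, for a partition `λ` given as the list of row lengths
bottom to top. -/
noncomputable def Schur (lam : List ℕ) : (ℕ →₀ ℕ) → ℤ :=
  ∑ᶠ T ∈ {T : List (List ℕ) | IsSYT T ∧ T.map List.length = lam}, Fqs (sytDes T)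

/-! ## Standard key tableaux and Demazure characters. -/

/-- `T` is a standard key tableau of shape the weak composition `a`: rows (listed
bottom to top, with row `i` of length `a_i`, possibly `0`) strictly decrease left to
right, the entries are `1, …, |a|`, and whenever an entry `i` lies above an entry
`k` in the same column with `i < k`, some entry `j` right of `k` satisfies `i < j`. -/
def IsSKT (a : List ℕ) (T : List (List ℕ)) : Prop :=
  T.map List.length = a ∧
    (∀ r ∈ T, r.Chain' (· > ·)) ∧
    T.flatten.Perm (List.range' 1 a.sum) ∧
    ∀ lo hi, lo < hi → hi < T.length →
      ∀ c, c < (T.getD hi []).length → c < (T.getD lo []).length →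
        (T.getD hi []).getD c 0 < (T.getD lo []).getD c 0 →
        ∃ c', c < c' ∧ c' < (T.getD lo []).length ∧
          (T.getD hi []).getD c 0 < (T.getD lo []).getD c' 0

/-- The runs of the word `n ⋯ 2 1` determined by the descents of a standard key
tableau `T` (where `i` is a descent when `i+1` lies weakly right of `i`). -/
def sktRuns (T : List (List ℕ)) : List (List ℕ) :=
  splitWhen (fun _ b => decide (colOf T b ≤ colOf T (b + 1)))
    ((List.range' 1 T.flatten.length).reverse)

/-- The minimal row (1-indexed from the bottom) among the cells of the entries of
`r` in `T`. -/
def minRow (T : List (List ℕ)) (r : List ℕ) : ℕ :=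
  ((r.map (fun e => rowOf T e + 1)).min?).getD 0

/-- The weak descent composition `des(T)` of a standard key tableau; `none` means
`T` is virtual. -/
def desSKT (T : List (List ℕ)) : Option (List ℕ) :=
  (desFromBlocks ((sktRuns T).map (fun r => ((minRow T r : ℕ) : ℤ)))
    ((sktRuns T).map List.length)).map
      (fun d => d ++ List.replicate (T.length - d.length) 0)

/-- The Demazure character (key polynomial) `κ_a`. -/
noncomputable def KeyPoly (a : List ℕ) : (ℕ →₀ ℕ) → ℤ :=
  ∑ᶠ T ∈ {T : List (List ℕ) | IsSKT a T}, FSlideO (desSKT T)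

/-- `κ` extended to virtual indices by `κ_∅ = 0`. -/
noncomputable def KeyPolyO : Option (List ℕ) → (ℕ →₀ ℕ) → ℤ
  | none => 0
  | some a => KeyPoly a

/-! ## Edelman–Greene insertion and weak insertion. -/

/-- Edelman–Greene insertion of `x` into a single row: either append `x`, or bump
the smallest entry exceeding `x` (suppressing the replacement when that entry is
`x+1` and `x` already occurs in the row). -/
def eginsRow (x : ℕ) (row : List ℕ) : List ℕ × Option ℕ :=
  match row.findIdx? (fun z => decide (x < z)) with
  | none => (row ++ [x], none)
  | some j =>
    let y := row.getD j 0
    (if y = x + 1 ∧ row.contains x then row else row.set j x, some y)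

/-- Edelman–Greene insertion of `x` into a tableau (rows bottom to top). -/
def egins : ℕ → List (List ℕ) → List (List ℕ)
  | x, [] => [[x]]
  | x, row :: rest =>
    match eginsRow x row with
    | (r, none) => r :: rest
    | (r, some y) => r :: egins y rest

/-- The Edelman–Greene insertion tableau `P(ρ)` of a word. -/
def PEG (ρ : List ℕ) : List (List ℕ) := ρ.foldl (fun P x => egins x P) []

/-- One sweep of all the maps `drop_i` on a tableau (rows bottom to top). -/
def sweepDropT (T : List (List ℕ)) : List (List ℕ) :=
  (List.range T.length).foldl (fun t i => dropAt (i + 1) t) T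

/-- The drop of a tableau: repeatedly drop until reaching the increasing Young
tableau of the class. -/
def dropCanon (T : List (List ℕ)) : List (List ℕ) :=
  sweepDropT^[T.flatten.length * T.length + 1] T

/-- Weak insertion of the letter `x` into a Yamanouchi key tableau `P`:
`lift (drop P ← x)`. -/
def winsert (x : ℕ) (P : List (List ℕ)) : List (List ℕ) :=
  liftCanon (egins x (dropCanon P))

/-- The weak insertion tableau `P̃(ρ)` (rows bottom to top). -/
def Pweak (ρ : List ℕ) : List (List ℕ) := ρ.foldl (fun P x => winsert x P) []

/-- The Yamanouchi word of the Coxeter–Knuth class of `ρ`: the row reading word of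
`P̃(ρ)`. -/
def yamWord (ρ : List ℕ) : List ℕ := wordOf (Pweak ρ)

/-- The shape (weak composition) of the weak insertion tableau of the first `m`
letters of `ρ`. -/
def shapeAt (ρ : List ℕ) (m : ℕ) : List ℕ :=
  (desWord (wordOf (Pweak (ρ.take m)))).getD []

/-- Append the entry `e` at the end of row `j` (0-indexed from the bottom),
extending with empty rows as needed. -/
def placeEntry (Q : List (List ℕ)) (j e : ℕ) : List (List ℕ) :=
  let Q' := Q ++ List.replicate (j + 1 - Q.length) []
  Q'.set j (Q'.getD j [] ++ [e])

/-- The (0-indexed) row in which the shape grows from `aold` to `anew`. -/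
def growRow (aold anew : List ℕ) : ℕ :=
  ((List.range anew.length).find?
    (fun j => decide (aold.getD j 0 ≠ anew.getD j 0))).getD 0

/-- The weak recording tableau `Q̃(ρ)`: entry `i` is placed in the cell where the
shape grows at the step inserting `ρ_i` (entries are placed in decreasing order). -/
def Qweak (ρ : List ℕ) : List (List ℕ) :=
  (List.range ρ.length).foldl (fun Q m =>
    placeEntry Q (growRow (shapeAt ρ m) (shapeAt ρ (m + 1))) (ρ.length - m)) []

/-! ## Elementary weak dual equivalence involutions. -/

/-- Column reading order on entries: by column, and bottom to top within a column. -/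
def colKeyLe (T : List (List ℕ)) (x y : ℕ) : Bool :=
  decide (colOf T x < colOf T y ∨ (colOf T x = colOf T y ∧ rowOf T x ≤ rowOf T y))

/-- Sort three values by a boolean order. -/
def sort3 (le : ℕ → ℕ → Bool) (a b c : ℕ) : ℕ × ℕ × ℕ :=
  if le a b then
    if le b c then (a, b, c) else if le a c then (a, c, b) else (c, a, b)
  else
    if le a c then (b, a, c) else if le b c then (b, c, a) else (c, b, a)

/-- Relabel the entries `x, y, z` of `T` as `x', y', z'` respectively. -/
def relabel3 (T : List (List ℕ)) (x y z x' y' z' : ℕ) : List (List ℕ) :=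
  T.map (List.map (fun t =>
    if t = x then x' else if t = y then y' else if t = z then z' else t))

/-- The elementary weak dual equivalence involution `d̃_i` on standard key tableaux:
with `u, v, w` the cells of `i−1, i, i+1` in column reading order, if `u` and `w`
share a row and `v` does not, cycle the three entries so that `i` shares a row with
`i ± 1`; else if `v` holds `i+1` swap `i−1, i`; else if `v` holds `i−1` swap
`i, i+1`; otherwise fix `T`. -/
def wde (i : ℕ) (T : List (List ℕ)) : List (List ℕ) :=
  let s := sort3 (colKeyLe T) (i - 1) i (i + 1)
  let u := s.1
  let v := s.2.1
  let w := s.2.2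
  if rowOf T u = rowOf T w ∧ rowOf T v ≠ rowOf T u then
    let T1 := relabel3 T u v w w u v
    let T2 := relabel3 T u v w v w u
    if rowOf T1 i = rowOf T1 (i - 1) ∨ rowOf T1 i = rowOf T1 (i + 1) then T1 else T2
  else if v = i + 1 then relabel3 T (i - 1) i (i + 1) i (i - 1) (i + 1)
  else if v = i - 1 then relabel3 T (i - 1) i (i + 1) (i - 1) (i + 1) i
  else T

/-- Remove trailing zero parts of a weak composition (two weak compositions are
identified when they differ only in trailing zeros). -/
def trimZeros (a : List ℕ) : List ℕ :=
  (a.reverse.dropWhile (fun x => x == 0)).reverse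

/-- The transposition `s_i` acting on compositions by interchanging the parts in
positions `i` and `i+1` (1-indexed). -/
def swapParts (i : ℕ) (c : List ℕ) : List ℕ :=
  if 1 ≤ i ∧ i < c.length then
    (c.set (i - 1) (c.getD i 0)).set i (c.getD (i - 1) 0)
  else c

end EG

/-!
Read a reduced word `ρ` from right to left and insert its letters one by one by Edelman–Greene row
insertion. This yields an increasing tableau `P`, whose reading word represents the inverse of the
permutation of `ρ`, and a standard tableau `Q` of the same shape recording the growth of `P`. With
respect to the preceding insertion, the new cell lies in a strictly higher row if the letter has
decreased and in a weakly lower row if it has increased, so `Q` determines the descents of `ρ`.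

Transposition turns inverses back into permutations and rows into columns: the reading word `σ` of
`Pᵀ` is a reduced word for the same `w` as `ρ`, with `𝔻(σ) = Pᵀ` an increasing Young tableau, and
`T = Qᵀ` is a standard Young tableau of shape `Des(σ)` with `Des(T) = Des(ρ)`. Every insertion step
can be undone, so `ρ ↦ (σ, T)` is a bijection from `R(w)` onto all such pairs, and summing `F_{Des}`
over the pairs with `σ` fixed gives `s_{Des(σ)}`.
-/

namespace EG

/-! ## Words and reducedness -/

theorem toPerm_nil : toPerm [] = 1 := rfl

theorem toPerm_cons (a : ℕ) (ρ : List ℕ) : toPerm (a :: ρ) = Equiv.swap a (a + 1) * toPerm ρ := by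
  simp [toPerm]

theorem toPerm_append (ρ σ : List ℕ) : toPerm (ρ ++ σ) = toPerm ρ * toPerm σ := by
  simp [toPerm]

theorem toPerm_singleton (a : ℕ) : toPerm [a] = Equiv.swap a (a + 1) := by
  simp [toPerm]

theorem toPerm_reverse (ρ : List ℕ) : toPerm ρ.reverse = (toPerm ρ)⁻¹ := by
  induction ρ with
  | nil => simp [toPerm_nil]
  | cons a ρ ih =>
    rw [reverse_cons, toPerm_append, ih, toPerm_singleton, toPerm_cons, mul_inv_rev, Equiv.swap_inv]

theorem commute_swap_swap {a b : ℕ} (h : a + 2 ≤ b ∨ b + 2 ≤ a) :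
    Commute (Equiv.swap a (a + 1)) (Equiv.swap b (b + 1)) :=
  (Equiv.Perm.disjoint_swap_swap (by simp; lia)).commute

theorem commute_swap_toPerm {x : ℕ} {ρ : List ℕ} (h : ∀ z ∈ ρ, x + 2 ≤ z ∨ z + 2 ≤ x) :
    Commute (Equiv.swap x (x + 1)) (toPerm ρ) :=
  Commute.list_prod_right _ _ (by simpa using fun z hz => commute_swap_swap (h z hz))

theorem toPerm_braid (x : ℕ) : toPerm [x, x + 1, x] = toPerm [x + 1, x, x + 1] := by
  simp only [toPerm_cons, toPerm_nil, mul_one, ← mul_assoc]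
  rw [Equiv.swap_mul_swap_mul_swap (by lia) (by lia), Equiv.swap_comm x (x + 1),
    Equiv.swap_comm (x + 1) (x + 1 + 1), Equiv.swap_mul_swap_mul_swap (by lia) (by lia),
    Equiv.swap_comm]

/-- Words with the same letters, the same length and the same product. Every Coxeter–Knuth move
preserves these three data, and they determine whether a word is reduced. -/
structure WordEquiv (ρ σ : List ℕ) : Prop where
  mem_iff : ∀ z, z ∈ ρ ↔ z ∈ σ
  length_eq : ρ.length = σ.length
  toPerm_eq : toPerm ρ = toPerm σ

namespace WordEquiv

variable {ρ σ τ ρ' σ' : List ℕ}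

theorem refl (ρ : List ℕ) : WordEquiv ρ ρ := ⟨fun _ => Iff.rfl, rfl, rfl⟩

theorem symm (h : WordEquiv ρ σ) : WordEquiv σ ρ :=
  ⟨fun z => (h.mem_iff z).symm, h.length_eq.symm, h.toPerm_eq.symm⟩

theorem trans (h : WordEquiv ρ σ) (h' : WordEquiv σ τ) : WordEquiv ρ τ :=
  ⟨fun z => (h.mem_iff z).trans (h'.mem_iff z), h.length_eq.trans h'.length_eq,
    h.toPerm_eq.trans h'.toPerm_eq⟩

theorem append (h : WordEquiv ρ σ) (h' : WordEquiv ρ' σ') : WordEquiv (ρ ++ ρ') (σ ++ σ') where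
  mem_iff z := by simp [h.mem_iff, h'.mem_iff]
  length_eq := by simp [h.length_eq, h'.length_eq]
  toPerm_eq := by simp [toPerm_append, h.toPerm_eq, h'.toPerm_eq]

theorem append_left (ρ : List ℕ) (h : WordEquiv σ τ) : WordEquiv (ρ ++ σ) (ρ ++ τ) :=
  (refl ρ).append h

theorem append_right (h : WordEquiv ρ σ) (τ : List ℕ) : WordEquiv (ρ ++ τ) (σ ++ τ) :=
  h.append (refl τ)

theorem reverse (h : WordEquiv ρ σ) : WordEquiv ρ.reverse σ.reverse where
  mem_iff z := by simp [h.mem_iff]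
  length_eq := by simp [h.length_eq]
  toPerm_eq := by simp [toPerm_reverse, h.toPerm_eq]

theorem isReducedWord (h : WordEquiv ρ σ) (hρ : IsReducedWord ρ) : IsReducedWord σ :=
  ⟨fun i hi => hρ.1 i ((h.mem_iff i).2 hi),
    fun τ hτ he => h.length_eq ▸ hρ.2 τ hτ (he.trans h.toPerm_eq.symm)⟩

theorem far_swap {x : ℕ} {ρ : List ℕ} (h : ∀ z ∈ ρ, x + 2 ≤ z ∨ z + 2 ≤ x) :
    WordEquiv (ρ ++ [x]) (x :: ρ) where
  mem_iff z := by simp [or_comm]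
  length_eq := by simp
  toPerm_eq := by
    rw [toPerm_append, toPerm_singleton, toPerm_cons, (commute_swap_toPerm h).eq]

theorem braid (x : ℕ) : WordEquiv [x, x + 1, x] [x + 1, x, x + 1] where
  mem_iff z := by simp; tauto
  length_eq := rfl
  toPerm_eq := toPerm_braid x

end WordEquiv

namespace IsReducedWord

theorem of_infix {ρ σ : List ℕ} (h : IsReducedWord ρ) (hσ : σ <:+: ρ) : IsReducedWord σ := by
  obtain ⟨a, b, rfl⟩ := hσ
  refine ⟨fun i hi => h.1 i (by simp [hi]), fun τ hτ he => ?_⟩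
  have hlen := h.2 (a ++ τ ++ b) (by grind [h.1]) (by simp [toPerm_append, he])
  simp only [length_append] at hlen
  lia

theorem reverse {ρ : List ℕ} (h : IsReducedWord ρ) : IsReducedWord ρ.reverse := by
  refine ⟨fun i hi => h.1 i (by simpa using hi), fun σ hσ he => ?_⟩
  simpa using h.2 σ.reverse (by simpa using hσ)
    (by rw [toPerm_reverse, he, toPerm_reverse, inv_inv])

/-- Otherwise the two letters `x` could be brought together, where they would cancel. -/
theorem exists_mem_near {x : ℕ} {ρ : List ℕ} (h : IsReducedWord (x :: (ρ ++ [x]))) :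
    ∃ z ∈ ρ, z ≤ x + 1 ∧ x ≤ z + 1 := by
  by_contra! hfar
  have he : toPerm ρ = toPerm (x :: (ρ ++ [x])) := by
    have hcomm : Commute (Equiv.swap x (x + 1)) (toPerm ρ) :=
      commute_swap_toPerm fun z hz => by grind
    rw [toPerm_cons, toPerm_append, toPerm_singleton, ← hcomm.eq, Equiv.swap_mul_self_mul]
  have hlen := h.2 ρ (fun i hi => h.1 i (by simp [hi])) he
  simp only [length_cons, length_append] at hlen
  lia

end IsReducedWord

theorem exists_word_mul_swap {ρ : List ℕ} {i : ℕ} (h : toPerm ρ (i + 1) < toPerm ρ i) :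
    ∃ σ : List ℕ, σ ⊆ ρ ∧ σ.length < ρ.length ∧
      toPerm σ = toPerm ρ * Equiv.swap i (i + 1) := by
  induction ρ with
  | nil => simp [toPerm_nil] at h
  | cons a ρ ih =>
    by_cases hρ : toPerm ρ (i + 1) < toPerm ρ i
    · obtain ⟨σ, hsub, hlen, he⟩ := ih hρ
      exact ⟨a :: σ, cons_subset_cons a hsub, by simpa using hlen,
        by rw [toPerm_cons, he, toPerm_cons, mul_assoc]⟩
    · have hne : toPerm ρ (i + 1) ≠ toPerm ρ i := (toPerm ρ).injective.ne (by lia)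
      have hval : toPerm ρ i = a ∧ toPerm ρ (i + 1) = a + 1 := by
        simp only [toPerm_cons, Equiv.Perm.mul_apply, Equiv.swap_apply_def] at h
        grind
      refine ⟨ρ, subset_cons_self a ρ, by simp, ?_⟩
      rw [toPerm_cons, mul_assoc, Equiv.mul_swap_eq_swap_mul, hval.1, hval.2,
        Equiv.swap_mul_self_mul]

namespace IsReducedWord

theorem toPerm_apply_lt {ρ : List ℕ} {i : ℕ} (h : IsReducedWord (ρ ++ [i])) :
    toPerm ρ i < toPerm ρ (i + 1) := by
  have hne : toPerm ρ i ≠ toPerm ρ (i + 1) := (toPerm ρ).injective.ne (by lia)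
  by_contra hlt
  obtain ⟨σ, hsub, hlen, he⟩ := exists_word_mul_swap (ρ := ρ) (i := i) (by lia)
  have := h.2 σ (fun j hj => h.1 j (by simp [hsub hj]))
    (by rw [he, toPerm_append, toPerm_singleton])
  simp only [length_append] at this
  lia

theorem lt_of_fixed {ρ : List ℕ} {N : ℕ} (h : IsReducedWord ρ) (hN : ∀ i ≥ N, toPerm ρ i = i) :
    ∀ a ∈ ρ, a < N := by
  induction ρ using List.reverseRecOn with
  | nil => simp
  | append_singleton ρ i ih =>
    have hasc := h.toPerm_apply_lt
    have hmul : ∀ j, toPerm (ρ ++ [i]) j = toPerm ρ (Equiv.swap i (i + 1) j) := by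
      simp [toPerm_append, toPerm_singleton]
    have hi : i + 1 < N := by
      by_contra! hle
      have hi1 := hN (i + 1) (by lia)
      rw [hmul, Equiv.swap_apply_right] at hi1
      have hfix := hN (toPerm ρ (i + 1)) (by lia)
      rw [hmul] at hfix
      have := (toPerm ρ).injective hfix
      grind
    have hρ : ∀ a ∈ ρ, a < N := ih (h.of_infix (prefix_append ρ [i]).isInfix) fun j hj => by
      simpa [hmul, Equiv.swap_apply_of_ne_of_ne (show j ≠ i by lia) (show j ≠ i + 1 by lia)]
        using hN j hj
    simpa [or_imp, forall_and] using ⟨hρ, by lia⟩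

end IsReducedWord

theorem toPerm_eventually_fixed (ρ : List ℕ) : ∃ N, ∀ i ≥ N, toPerm ρ i = i := by
  induction ρ with
  | nil => exact ⟨0, by simp [toPerm_nil]⟩
  | cons a ρ ih =>
    obtain ⟨N, hN⟩ := ih
    refine ⟨max N (a + 2), fun i hi => ?_⟩
    rw [toPerm_cons, Equiv.Perm.mul_apply, hN i (by lia), Equiv.swap_apply_of_ne_of_ne] <;> lia

theorem finite_reducedWords (w : Equiv.Perm ℕ) : {ρ : List ℕ | ReducedWordFor ρ w}.Finite := by
  obtain hempty | ⟨ρ₀, hρ₀⟩ := Set.eq_empty_or_nonempty {ρ : List ℕ | ReducedWordFor ρ w}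
  · simp [hempty]
  obtain ⟨N, hN⟩ := toPerm_eventually_fixed ρ₀
  refine ((List.finite_length_eq (Fin N) ρ₀.length).image (List.map Fin.val)).subset ?_
  rintro ρ ⟨hρ, he⟩
  have hperm : toPerm ρ = toPerm ρ₀ := he.trans hρ₀.2.symm
  have hlt := hρ.lt_of_fixed (hperm ▸ hN)
  refine ⟨ρ.pmap Fin.mk hlt, ?_, by simp [map_pmap]⟩
  simpa using le_antisymm (hρ.2 _ hρ₀.1.1 hperm.symm) (hρ₀.1.2 _ hρ.1 hperm)

/-! ## Rows -/

section RowLT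

variable {α : Type*}

/-- The row `s` may be placed on top of the row `r` in a tableau: it is not longer than `r`, and
each of its entries is larger than the entry of `r` below it. -/
def RowLT [LT α] : List α → List α → Prop
  | _, [] => True
  | [], _ :: _ => False
  | a :: r, b :: s => a < b ∧ RowLT r s

section LT

variable [LT α] {r s t : List α}

@[simp, grind =] theorem rowLT_nil_right : RowLT r [] ↔ True := by cases r <;> rfl

@[simp, grind =] theorem rowLT_nil_left : RowLT [] s ↔ s = [] := by cases s <;> simp [RowLT]

@[simp, grind =] theorem rowLT_cons_cons {a b : α} :
    RowLT (a :: r) (b :: s) ↔ a < b ∧ RowLT r s := Iff.rfl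

theorem RowLT.of_append (h : RowLT r (s ++ t)) : RowLT r s := by
  induction s generalizing r <;> cases r <;> grind

theorem RowLT.append_left (h : RowLT r s) (t : List α) : RowLT (r ++ t) s := by
  induction s generalizing r <;> cases r <;> grind

theorem RowLT.exists_lt (h : RowLT r s) {b : α} (hb : b ∈ s) : ∃ a ∈ r, a < b := by
  induction s generalizing r <;> cases r <;> grind

theorem RowLT.length_le (h : RowLT r s) : s.length ≤ r.length := by
  induction s generalizing r <;> cases r <;> grind

theorem RowLT.of_append_left (h : RowLT (r ++ t) s) (hs : s.length ≤ r.length) : RowLT r s := by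
  induction s generalizing r <;> cases r <;> grind

theorem RowLT.append_singleton_right {e : α} (h : RowLT r s) (hs : s.length < r.length)
    (he : ∀ z ∈ r, z < e) : RowLT r (s ++ [e]) := by
  induction s generalizing r <;> cases r <;> grind [mem_cons_self]

end LT

theorem RowLT.of_append_singleton_left [Preorder α] {r s : List α} {e : α}
    (h : RowLT (r ++ [e]) s) (hs : ∀ z ∈ s, z ≤ e) :
    RowLT r s := by
  induction s generalizing r with
  | nil => simp
  | cons z s ih =>
    cases r with
    | nil => exact absurd h.1 (hs z mem_cons_self).not_gt
    | cons w r => exact ⟨h.1, ih h.2 fun z hz => hs z (mem_cons_of_mem _ hz)⟩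

end RowLT

/-- `Bump x y r r'` says that Edelman–Greene insertion of `x` into the strictly increasing row `r`
bumps `y` into the next row and leaves the row `r'`. As a relation it can also be read backwards,
recovering `x` and `r` from `y` and `r'`. -/
inductive Bump (x y : ℕ) : List ℕ → List ℕ → Prop
  | replace (t : List ℕ) : x < y → (∀ z ∈ t, y < z) → Bump x y (y :: t) (x :: t)
  | keep (t : List ℕ) : y = x + 1 → (∀ z ∈ t, y < z) → Bump x y (x :: y :: t) (x :: y :: t)
  | cons (z : ℕ) (r r' : List ℕ) : z < x → Bump x y r r' → Bump x y (z :: r) (z :: r')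

namespace Bump

variable {x y z : ℕ} {r r' s s' : List ℕ}

theorem lt (h : Bump x y r r') : x < y := by
  induction h <;> grind

theorem mem_left (h : Bump x y r r') : y ∈ r := by
  induction h <;> grind

theorem mem_right (h : Bump x y r r') : x ∈ r' := by
  induction h <;> grind

theorem mem_or_eq_of_mem_right (h : Bump x y r r') (hz : z ∈ r') : z ∈ r ∨ z = x := by
  induction h <;> grind

theorem mem_or_eq_of_mem_left (h : Bump x y r r') (hz : z ∈ r) : z ∈ r' ∨ z = y := by
  induction h <;> grind

theorem length_eq (h : Bump x y r r') : r'.length = r.length := by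
  induction h <;> grind

theorem pairwise_iff (h : Bump x y r r') : r.Pairwise (· < ·) ↔ r'.Pairwise (· < ·) := by
  induction h with
  | replace | keep => grind [pairwise_cons]
  | cons z r r' hz hb ih =>
    have := hb.lt
    simp only [pairwise_cons, ih, and_congr_left_iff]
    grind [hb.mem_or_eq_of_mem_left, hb.mem_or_eq_of_mem_right]

theorem le_of_lt_mem (h : Bump x y r r') (hz : z ∈ r) (hxz : x < z) : y ≤ z := by
  induction h <;> grind

theorem le_of_lt_mem_right (h : Bump x y r r') (hz : z ∈ r') (hxz : x < z) :
    y < z ∨ z = x + 1 := by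
  induction h <;> grind

theorem unique {y₁ y₂ : ℕ} {r₁ r₂ : List ℕ} (h₁ : Bump x y₁ r r₁) (h₂ : Bump x y₂ r r₂) :
    y₁ = y₂ ∧ r₁ = r₂ := by
  induction h₁ generalizing r₂ with
  | replace | keep => cases h₂ <;> grind
  | cons z r r' hz hb ih => cases h₂ <;> grind [hb.lt]

theorem unique_left {x₁ x₂ : ℕ} {r₁ r₂ : List ℕ} (h₁ : Bump x₁ y r₁ r) (h₂ : Bump x₂ y r₂ r)
    (hr : r.Pairwise (· < ·)) : x₁ = x₂ ∧ r₁ = r₂ := by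
  induction h₁ generalizing r₂ with
  | replace | keep =>
    cases h₂ with
    | replace | keep => grind [pairwise_cons]
    | cons _ _ _ hz hb => grind [hb.lt, hb.mem_right, pairwise_cons]
  | cons z r r' hz hb ih => cases h₂ <;> grind [hb.lt, hb.mem_right, pairwise_cons]

theorem exists_right (hr : r.Pairwise (· < ·)) (hx : ∃ z ∈ r, x ≤ z) (hx' : x ∈ r → x + 1 ∈ r) :
    ∃ y r', Bump x y r r' := by
  induction r with
  | nil => simp at hx
  | cons z t ih =>
    rcases lt_trichotomy x z with hlt | rfl | hgt
    · exact ⟨z, x :: t, .replace t hlt (by grind [pairwise_cons])⟩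
    · obtain ⟨t', rfl⟩ : ∃ t', t = (x + 1) :: t' := by cases t <;> grind [pairwise_cons]
      exact ⟨x + 1, _, .keep t' rfl (by grind [pairwise_cons])⟩
    · obtain ⟨y, r', hb⟩ := ih hr.of_cons (by grind) (by grind)
      exact ⟨y, z :: r', .cons _ _ _ hgt hb⟩

theorem exists_left (hr : r.Pairwise (· < ·)) (hy : ∃ z ∈ r, z < y)
    (hy' : y ∈ r → ∃ z ∈ r, y = z + 1) : ∃ x r', Bump x y r' r := by
  induction r with
  | nil => simp at hy
  | cons z t ih =>
    by_cases ht : ∃ z ∈ t, z < y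
    · obtain ⟨x, r', hb⟩ := ih (by grind [pairwise_cons]) ht (by grind [pairwise_cons])
      exact ⟨x, z :: r', .cons _ _ _ (by grind [hb.mem_right, pairwise_cons]) hb⟩
    · by_cases hyt : y ∈ t
      · obtain ⟨t', rfl⟩ : ∃ t', t = y :: t' := by cases t <;> grind [pairwise_cons]
        exact ⟨z, _, .keep t' (by grind [pairwise_cons]) (by grind [pairwise_cons])⟩
      · exact ⟨z, y :: t, .replace t (by grind [pairwise_cons]) (by grind [pairwise_cons])⟩

theorem rowLT_right (h : Bump x y r r') (hs : RowLT r s) : RowLT r' s := by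
  have := h.lt
  induction h generalizing s <;> cases s <;> grind

theorem rowLT_of_rowLT_right (h : Bump x y s s') (hr : RowLT r s') : RowLT r s := by
  have := h.lt
  induction h generalizing r <;> cases r <;> grind

theorem rowLT_append (h : Bump x y r r') (hr : RowLT r s) (hs : ∀ z ∈ s, z < y) :
    RowLT r' (s ++ [y]) := by
  have := h.lt
  induction h generalizing s <;> cases s <;> grind [mem_cons_self]

theorem rowLT_bump (h : Bump x y r r') (h' : Bump y z s s') (hr : RowLT r s) : RowLT r' s' := by
  have := h.lt
  induction h generalizing s s' with
  | replace | keep => cases h' <;> grind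
  | cons w r r' hw hb ih => cases h' <;> grind [hb.rowLT_right]

theorem rowLT_left (h : Bump x y r r') (hr : RowLT r' s) (hs : ∀ z ∈ s, y < z) : RowLT r s := by
  induction h generalizing s <;> cases s <;> grind

theorem rowLT_of_rowLT_append (h : Bump x y r r') (hr : RowLT r' (s ++ [y])) (hs : ∀ z ∈ s, z < y) :
    RowLT r s := by
  induction h generalizing s with
  | replace t _ hgt =>
    cases s with
    | nil => simp
    | cons w s =>
      obtain ⟨e, he, hey⟩ := RowLT.exists_lt hr.2 (b := y) (by simp)
      exact absurd hey (hgt e he).not_gt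
  | keep t => exact hr.of_append
  | cons => cases s <;> grind

theorem rowLT_of_rowLT_bump (h : Bump x y r r') (h' : Bump y z s s') (hr : RowLT r' s')
    (hs : s'.Pairwise (· < ·)) : RowLT r s := by
  have := h.lt
  induction h generalizing s s' with
  | replace t _ hgt =>
    cases h' with
    | replace => grind
    | keep u =>
      cases t with
      | nil => grind
      | cons v t => grind [hgt v mem_cons_self]
    | cons w s s' hw hb =>
      obtain ⟨e, he, hey⟩ := hr.2.exists_lt hb.mem_right
      exact absurd hey (hgt e he).not_gt
  | keep => exact h'.rowLT_of_rowLT_right hr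
  | cons w r r' hw hb ih => cases h' <;> grind [hb.rowLT_left]

theorem wordEquiv (h : Bump x y r r') : WordEquiv (r ++ [x]) (y :: r') := by
  induction h with
  | replace t hlt hgt =>
    exact (WordEquiv.far_swap fun z hz => by grind).append_left [y]
  | keep t he hgt =>
    subst he
    have hcomm : WordEquiv (x :: (x + 1) :: (t ++ [x])) (x :: (x + 1) :: x :: t) :=
      (WordEquiv.far_swap fun z hz => by grind).append_left [x, x + 1]
    exact hcomm.trans ((WordEquiv.braid x).append_right t)
  | cons z r r' hz hb ih =>
    have hcomm : WordEquiv [z, y] [y, z] :=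
      WordEquiv.far_swap (ρ := [z]) fun w hw => by grind [hb.lt]
    exact (ih.append_left [z]).trans (hcomm.append_right r')

end Bump

theorem pairwise_append_singleton {α : Type*} {R : α → α → Prop} {l : List α} {a : α} :
    (l ++ [a]).Pairwise R ↔ l.Pairwise R ∧ ∀ b ∈ l, R b a := by
  simp [pairwise_append]

/-! ## Insertion -/

/-- Increasing tableaux of partition shape, given by their nonempty rows from bottom to top. Unlike
`IsIncreasingYoungRows`, this is recursive in the list of rows. -/
def IsTableau : List (List ℕ) → Prop
  | [] => True
  | r :: R => r ≠ [] ∧ r.Pairwise (· < ·) ∧ RowLT r (R.headD []) ∧ IsTableau R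

@[simp, grind =] theorem isTableau_nil : IsTableau [] ↔ True := Iff.rfl

@[simp, grind =] theorem isTableau_cons {r : List ℕ} {R : List (List ℕ)} :
    IsTableau (r :: R) ↔ r ≠ [] ∧ r.Pairwise (· < ·) ∧ RowLT r (R.headD []) ∧ IsTableau R := Iff.rfl

@[simp] theorem wordOf_nil : wordOf [] = [] := rfl

theorem wordOf_cons (r : List ℕ) (R : List (List ℕ)) : wordOf (r :: R) = wordOf R ++ r := by
  simp [wordOf]

theorem IsTableau.pairwise_headD {T : List (List ℕ)} (h : IsTableau T) :
    (T.headD []).Pairwise (· < ·) := by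
  cases T with
  | nil => exact .nil
  | cons r R => exact h.2.1

theorem mem_flatten_of_mem_headD {α : Type*} {L : List (List α)} {a : α} (h : a ∈ L.headD []) :
    a ∈ L.flatten := by
  cases L <;> simp_all

theorem rowOf_cons (r : List ℕ) (R : List (List ℕ)) (z : ℕ) :
    rowOf (r :: R) z = if z ∈ r then 0 else rowOf R z + 1 := by
  by_cases h : z ∈ r <;> simp [rowOf, findIdx_cons, h]

theorem IsReducedWord.succ_mem {x : ℕ} {r : List ℕ} (h : IsReducedWord (r ++ [x]))
    (hr : r.Pairwise (· < ·)) (hx : x ∈ r) : x + 1 ∈ r := by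
  obtain ⟨s, t, rfl⟩ := append_of_mem hx
  obtain ⟨z, hz, hzx, -⟩ := (h.of_infix (σ := x :: (t ++ [x])) ⟨s, [], by simp⟩).exists_mem_near
  grind [pairwise_cons]

theorem IsReducedWord.exists_mem_eq_succ {y : ℕ} {r : List ℕ} (h : IsReducedWord (y :: r))
    (hr : r.Pairwise (· < ·)) (hy : y ∈ r) : ∃ z ∈ r, y = z + 1 := by
  obtain ⟨s, t, rfl⟩ := append_of_mem hy
  obtain ⟨z, hz, -, hyz⟩ := (h.of_infix (σ := y :: (s ++ [y])) ⟨[], t, by simp⟩).exists_mem_near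
  exact ⟨z, by simp [hz], by grind⟩

/-- `Insertion e x k P Q P' Q'` says that Edelman–Greene insertion of `x` into the tableau `P`
gives `P'`, the new cell being in row `k` (counted from `0`), and that adding to `Q` the entry `e`
at the end of row `k` gives `Q'`. -/
inductive Insertion (e : ℕ) :
    ℕ → ℕ → List (List ℕ) → List (List ℕ) → List (List ℕ) → List (List ℕ) → Prop
  | nil (x : ℕ) : Insertion e x 0 [] [] [[x]] [[e]]
  | append (x : ℕ) (r q : List ℕ) (R S : List (List ℕ)) : r ≠ [] → (∀ z ∈ r, z < x) →
      Insertion e x 0 (r :: R) (q :: S) ((r ++ [x]) :: R) ((q ++ [e]) :: S)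
  | bump {x y k : ℕ} {r r' : List ℕ} {R R' S S' : List (List ℕ)} (q : List ℕ) : Bump x y r r' →
      Insertion e y k R S R' S' → Insertion e x (k + 1) (r :: R) (q :: S) (r' :: R') (q :: S')

namespace Insertion

variable {e e' x x' k k' z : ℕ} {P P' P'' Q Q' Q'' : List (List ℕ)}

theorem headD_left (h : Insertion e x k P Q P' Q') :
    (P'.headD [] = P.headD [] ++ [x] ∧ ∀ z ∈ P.headD [], z < x) ∨
      ∃ y, Bump x y (P.headD []) (P'.headD []) := by
  cases h with
  | nil => simp
  | append _ _ _ _ _ _ hx => exact .inl ⟨rfl, hx⟩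
  | bump q hb => exact .inr ⟨_, hb⟩

theorem headD_right (h : Insertion e x k P Q P' Q') :
    Q'.headD [] = Q.headD [] ∨ Q'.headD [] = Q.headD [] ++ [e] := by
  cases h <;> simp

theorem mem_headD (h : Insertion e x k P Q P' Q') : x ∈ P'.headD [] := by
  obtain ⟨h, -⟩ | ⟨y, h⟩ := h.headD_left
  · exact h ▸ mem_concat_self
  · exact h.mem_right

theorem wordEquiv (h : Insertion e x k P Q P' Q') : WordEquiv (wordOf P ++ [x]) (wordOf P') := by
  induction h with
  | nil x => exact .refl [x]
  | append x r q R S => simpa [wordOf_cons] using WordEquiv.refl _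
  | @bump x y _ r r' R R' _ _ _ hb _ ih =>
    have hrow := hb.wordEquiv.append_left (wordOf R)
    have hrest := ih.append_right r'
    simp only [wordOf_cons, append_assoc, singleton_append] at hrow hrest ⊢
    exact hrow.trans hrest

theorem perm (h : Insertion e x k P Q P' Q') : Q'.flatten.Perm (e :: Q.flatten) := by
  induction h with
  | nil => simp
  | append => simp
  | bump q _ _ ih => exact (ih.append_left q).trans perm_middle

theorem map_length_eq_iff (h : Insertion e x k P Q P' Q') :
    P'.map length = Q'.map length ↔ P.map length = Q.map length := by
  induction h with
  | nil => simp
  | append => simp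
  | bump q hb _ ih => simp [hb.length_eq, ih]

theorem isTableau_left (h : Insertion e x k P Q P' Q') (hP : IsTableau P) : IsTableau P' := by
  induction h with
  | nil => simp
  | append x r _ R _ _ hx =>
    exact ⟨by simp, pairwise_append_singleton.2 ⟨hP.2.1, hx⟩, hP.2.2.1.append_left _, hP.2.2.2⟩
  | @bump x y k r r' R R' S S' _ hb h ih =>
    obtain ⟨-, hsorted, hcol, hR⟩ := hP
    refine ⟨ne_nil_of_mem hb.mem_right, hb.pairwise_iff.1 hsorted, ?_, ih hR⟩
    obtain ⟨hhead, hlt⟩ | ⟨z, hb'⟩ := h.headD_left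
    · exact hhead ▸ hb.rowLT_append hcol hlt
    · exact hb.rowLT_bump hb' hcol

theorem isTableau_right (h : Insertion e x k P Q P' Q') (hQ : IsTableau Q) (hP' : IsTableau P')
    (hshape : P'.map length = Q'.map length) (he : ∀ z ∈ Q.flatten, z < e) : IsTableau Q' := by
  induction h with
  | nil => simp
  | append x r q R S =>
    exact ⟨by simp, pairwise_append_singleton.2 ⟨hQ.2.1, fun z hz => he z (by simp [hz])⟩,
      hQ.2.2.1.append_left _, hQ.2.2.2⟩
  | @bump _ y k _ r' R R' S S' q _ h ih =>
    obtain ⟨hq, hsorted, hcol, hS⟩ := hQ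
    simp only [flatten_cons, mem_append, map_cons, cons.injEq] at he hshape
    refine ⟨hq, hsorted, ?_, ih hS hP'.2.2.2 hshape.2 fun z hz => he z (.inr hz)⟩
    obtain hhead | hhead := h.headD_right
    · rwa [hhead]
    · have hlen : (R'.headD []).length = (S'.headD []).length := by
        cases R' <;> cases S' <;> simp_all
      rw [hhead]
      refine hcol.append_singleton_right ?_ fun z hz => he z (.inl hz)
      have := hP'.2.2.1.length_le
      grind

theorem unique {k₁ k₂ : ℕ} {P₁ P₂ Q₁ Q₂ : List (List ℕ)} (h₁ : Insertion e x k₁ P Q P₁ Q₁)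
    (h₂ : Insertion e x k₂ P Q P₂ Q₂) : P₁ = P₂ ∧ Q₁ = Q₂ := by
  induction h₁ generalizing k₂ P₂ Q₂ with
  | nil => cases h₂; simp
  | append x r q R S _ hx =>
    cases h₂ with
    | append => simp
    | bump _ hb => exact absurd (hx _ hb.mem_left) hb.lt.not_gt
  | bump q hb _ ih =>
    cases h₂ with
    | append _ _ _ _ _ _ hx => exact absurd (hx _ hb.mem_left) hb.lt.not_gt
    | bump _ hb' h' =>
      obtain ⟨rfl, rfl⟩ := hb.unique hb'
      simp [ih h']

theorem unique_left {x₁ x₂ k₁ k₂ : ℕ} {P₁ P₂ Q₁ Q₂ : List (List ℕ)}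
    (h₁ : Insertion e x₁ k₁ P₁ Q₁ P Q) (h₂ : Insertion e x₂ k₂ P₂ Q₂ P Q) (hP : IsTableau P)
    (he₁ : e ∉ Q₁.flatten) (he₂ : e ∉ Q₂.flatten) : x₁ = x₂ ∧ P₁ = P₂ ∧ Q₁ = Q₂ := by
  induction h₁ generalizing x₂ k₂ P₂ Q₂ with
  | nil x =>
    generalize hT : [[x]] = T at h₂
    generalize hU : [[e]] = U at h₂
    cases h₂ with
    | nil => simp_all
    | append => simp_all [singleton_eq_append_iff]
    | bump =>
      obtain ⟨rfl, rfl⟩ := cons.inj hU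
      simp at he₂
  | append x r q R S hr _ =>
    generalize hT : (r ++ [x]) :: R = T at h₂
    generalize hU : (q ++ [e]) :: S = U at h₂
    cases h₂ with
    | nil => simp_all [append_eq_singleton_iff]
    | append => simp_all
    | bump =>
      obtain ⟨rfl, rfl⟩ := cons.inj hU
      simp at he₂
  | bump q hb h ih =>
    cases h₂ with
    | nil | append => simp at he₁
    | bump _ hb' h' =>
      simp only [flatten_cons, mem_append, not_or] at he₁ he₂
      obtain ⟨rfl, rfl, rfl⟩ := ih h' hP.2.2.2 he₁.2 he₂.2
      obtain ⟨rfl, rfl⟩ := hb.unique_left hb' hP.2.1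
      simp

theorem exists_right (hP : IsTableau P) (hPQ : P.map length = Q.map length)
    (hred : IsReducedWord (wordOf P ++ [x])) (e : ℕ) : ∃ k P' Q', Insertion e x k P Q P' Q' := by
  induction P generalizing x Q with
  | nil =>
    obtain rfl : Q = [] := by simpa using hPQ.symm
    exact ⟨_, _, _, .nil x⟩
  | cons r R ih =>
    obtain ⟨q, S, rfl⟩ : ∃ q S, Q = q :: S := exists_cons_of_ne_nil (by rintro rfl; simp at hPQ)
    obtain ⟨hr, hsorted, -, hR⟩ := hP
    rw [wordOf_cons, append_assoc] at hred
    by_cases hx : ∀ z ∈ r, z < x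
    · exact ⟨_, _, _, .append x r q R S hr hx⟩
    · push Not at hx
      obtain ⟨y, r', hb⟩ := Bump.exists_right hsorted hx
        ((hred.of_infix (suffix_append _ _).isInfix).succ_mem hsorted)
      have hred' : IsReducedWord (wordOf R ++ y :: r') :=
        (hb.wordEquiv.append_left (wordOf R)).isReducedWord hred
      obtain ⟨k, R', S', h⟩ := ih hR (cons.inj hPQ).2
        (hred'.of_infix (σ := wordOf R ++ [y]) ⟨[], r', by simp⟩)
      exact ⟨_, _, _, .bump q hb h⟩

theorem exists_left_of_mem {r' q' : List ℕ} {R S : List (List ℕ)} (hP' : IsTableau (r' :: R))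
    (hQ' : IsTableau (q' :: S)) (hrow : r'.length = q'.length)
    (hshape : R.map length = S.map length) (he : e ∈ q')
    (hmax : ∀ z, z ∈ q' ∨ z ∈ S.flatten → z ≤ e) :
    ∃ x k P Q, IsTableau P ∧ IsTableau Q ∧ Insertion e x k P Q (r' :: R) (q' :: S) := by
  obtain ⟨hr', hsorted, hcol, hR⟩ := hP'
  obtain ⟨hq', hqsorted, hqcol, hS⟩ := hQ'
  obtain ⟨r, x, rfl⟩ := (eq_nil_or_concat' _).resolve_left hr'
  obtain ⟨q, e', rfl⟩ := (eq_nil_or_concat' _).resolve_left hq'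
  rw [pairwise_append_singleton] at hsorted hqsorted
  obtain rfl : e' = e := by
    have := hmax e' (by simp)
    grind
  have hqcol' : RowLT q (S.headD []) :=
    hqcol.of_append_singleton_left fun z hz => hmax z (.inr (mem_flatten_of_mem_headD hz))
  have hcol' : RowLT r (R.headD []) := by
    refine hcol.of_append_left ?_
    have := hqcol'.length_le
    cases R <;> cases S <;> simp_all
  by_cases hr : r = []
  · subst hr
    obtain rfl : R = [] := by cases R <;> simp_all
    obtain rfl : S = [] := by simpa using hshape.symm
    obtain rfl : q = [] := by simpa using hrow.symm
    exact ⟨x, 0, [], [], trivial, trivial, .nil x⟩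
  · refine ⟨x, 0, r :: R, q :: S, ⟨hr, hsorted.1, hcol', hR⟩, ⟨?_, hqsorted.1, hqcol', hS⟩,
      .append x r q R S hr hsorted.2⟩
    rintro rfl
    simp_all

theorem exists_left (hP' : IsTableau P') (hQ' : IsTableau Q')
    (hshape : P'.map length = Q'.map length) (hred : IsReducedWord (wordOf P'))
    (he : e ∈ Q'.flatten) (hmax : ∀ z ∈ Q'.flatten, z ≤ e) :
    ∃ x k P Q, IsTableau P ∧ IsTableau Q ∧ Insertion e x k P Q P' Q' := by
  induction P' generalizing Q' with
  | nil =>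
    obtain rfl : Q' = [] := by simpa using hshape.symm
    simp at he
  | cons r' R' ih =>
    obtain ⟨q', S', rfl⟩ : ∃ q S, Q' = q :: S :=
      exists_cons_of_ne_nil (by rintro rfl; simp at hshape)
    simp only [map_cons, cons.injEq, flatten_cons, mem_append] at hshape he hmax
    by_cases heq : e ∈ q'
    · exact exists_left_of_mem hP' hQ' hshape.1 hshape.2 heq hmax
    obtain ⟨hr', hsorted, hcol, hR'⟩ := hP'
    obtain ⟨hq, hqsorted, hqcol, hS'⟩ := hQ'
    rw [wordOf_cons] at hred
    obtain ⟨y, k, R, S, hR, hS, h⟩ := ih hR' hS' hshape.2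
      (hred.of_infix (prefix_append _ _).isInfix) (he.resolve_left heq) fun z hz => hmax z (.inr hz)
    have hred' : IsReducedWord (wordOf R ++ y :: r') := by
      simpa using (h.wordEquiv.append_right r').symm.isReducedWord hred
    obtain ⟨x, r, hb⟩ := Bump.exists_left hsorted (hcol.exists_lt h.mem_headD)
      ((hred'.of_infix (suffix_append _ _).isInfix).exists_mem_eq_succ hsorted)
    refine ⟨x, k + 1, r :: R, q' :: S,
      ⟨ne_nil_of_mem hb.mem_left, hb.pairwise_iff.2 hsorted, ?_, hR⟩, ⟨hq, hqsorted, ?_, hS⟩,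
      .bump q' hb h⟩
    · obtain ⟨hhead, hlt⟩ | ⟨z, hb'⟩ := h.headD_left
      · exact hb.rowLT_of_rowLT_append (hhead ▸ hcol) hlt
      · exact hb.rowLT_of_rowLT_bump hb' hcol (hR'.pairwise_headD)
    · obtain hhead | hhead := h.headD_right
      · rwa [← hhead]
      · exact (hhead ▸ hqcol).of_append

theorem row_le_of_lt (h : Insertion e x k P Q P' Q') (h' : Insertion e' x' k' P' Q' P'' Q'')
    (hx : x < x') : k' ≤ k := by
  induction h generalizing x' k' P'' Q'' with
  | nil | append =>
    cases h' with
    | append => simp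
    | bump q hb => grind [hb.mem_left, hb.lt]
  | bump q hb _ ih =>
    cases h' with
    | append => simp
    | bump _ hb' h' =>
      have := ih h' (by grind [hb.le_of_lt_mem_right hb'.mem_left, hb'.lt])
      omega

theorem row_lt_of_lt (h : Insertion e x k P Q P' Q') (h' : Insertion e' x' k' P' Q' P'' Q'')
    (hx : x' < x) : k < k' := by
  have hmem := h.mem_headD
  induction h generalizing x' k' P'' Q'' with
  | nil | append =>
    cases h' with
    | append _ _ _ _ _ _ hlt => exact absurd (hlt _ hmem) hx.not_gt
    | bump => simp
  | bump q hb h ih =>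
    cases h' with
    | append _ _ _ _ _ _ hlt => exact absurd (hlt _ hmem) hx.not_gt
    | bump _ hb' h' =>
      have := ih h' ((hb'.le_of_lt_mem hmem hx).trans_lt hb.lt) h.mem_headD
      omega

theorem rowOf_self (h : Insertion e x k P Q P' Q') (he : e ∉ Q.flatten) : rowOf Q' e = k := by
  induction h <;> grind [rowOf_cons, flatten_cons]

theorem rowOf_of_mem (h : Insertion e x k P Q P' Q') (hz : z ∈ Q.flatten) (hze : z ≠ e) :
    rowOf Q' z = rowOf Q z := by
  induction h <;> grind [rowOf_cons, flatten_cons]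

end Insertion

/-! ## The correspondence -/

/-- `Correspondence ρ P Q` says that inserting the letters of `ρ` from right to left gives the
insertion tableau `P` and the recording tableau `Q`. -/
inductive Correspondence : List ℕ → List (List ℕ) → List (List ℕ) → Prop
  | nil : Correspondence [] [] []
  | cons {ρ : List ℕ} {x k : ℕ} {P Q P' Q' : List (List ℕ)} : Correspondence ρ P Q →
      Insertion (ρ.length + 1) x k P Q P' Q' → Correspondence (x :: ρ) P' Q'

theorem range'_one_succ (n : ℕ) : range' 1 (n + 1) = range' 1 n ++ [n + 1] := by
  rw [range'_concat, one_mul, add_comm]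

theorem IsTableau.eq_nil {T : List (List ℕ)} (h : IsTableau T) (hT : T.flatten = []) : T = [] := by
  cases T with
  | nil => rfl
  | cons r R => exact absurd (append_eq_nil_iff.1 hT).1 h.1

namespace Correspondence

variable {ρ σ : List ℕ} {P P' Q Q' : List (List ℕ)}

theorem isTableau_left (h : Correspondence ρ P Q) : IsTableau P := by
  induction h with
  | nil => trivial
  | cons _ h ih => exact h.isTableau_left ih

theorem map_length_eq (h : Correspondence ρ P Q) : P.map length = Q.map length := by
  induction h with
  | nil => rfl
  | cons _ h ih => exact h.map_length_eq_iff.2 ih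

theorem perm (h : Correspondence ρ P Q) : Q.flatten.Perm (range' 1 ρ.length) := by
  induction h with
  | nil => simp
  | cons _ h ih =>
    rw [length_cons, range'_one_succ]
    exact h.perm.trans ((ih.cons _).trans (perm_append_singleton _ _).symm)

theorem mem_flatten_iff (h : Correspondence ρ P Q) {z : ℕ} :
    z ∈ Q.flatten ↔ 1 ≤ z ∧ z ≤ ρ.length := by
  rw [h.perm.mem_iff, mem_range'_1]
  lia

theorem length_succ_notMem (h : Correspondence ρ P Q) : ρ.length + 1 ∉ Q.flatten := by
  simp [h.mem_flatten_iff, -mem_flatten]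

theorem isTableau_right (h : Correspondence ρ P Q) : IsTableau Q := by
  induction h with
  | nil => trivial
  | cons h hi ih =>
    have h' := h.cons hi
    exact hi.isTableau_right ih h'.isTableau_left h'.map_length_eq fun z hz => by
      rw [h.mem_flatten_iff] at hz
      lia

theorem wordEquiv (h : Correspondence ρ P Q) : WordEquiv ρ.reverse (wordOf P) := by
  induction h with
  | nil => exact .refl []
  | @cons ρ x _ _ _ _ _ _ hi ih =>
    rw [reverse_cons]
    exact (ih.append_right [x]).trans hi.wordEquiv

theorem exists_of_isReducedWord (hρ : IsReducedWord ρ) : ∃ P Q, Correspondence ρ P Q := by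
  induction ρ with
  | nil => exact ⟨_, _, .nil⟩
  | cons x ρ ih =>
    obtain ⟨P, Q, h⟩ := ih (hρ.of_infix (suffix_cons x ρ).isInfix)
    have hP : IsReducedWord (wordOf P ++ [x]) :=
      (h.wordEquiv.append_right [x]).isReducedWord (by simpa using hρ.reverse)
    obtain ⟨k, P', Q', hi⟩ :=
      Insertion.exists_right h.isTableau_left h.map_length_eq hP (ρ.length + 1)
    exact ⟨P', Q', h.cons hi⟩

theorem unique (h : Correspondence ρ P Q) (h' : Correspondence ρ P' Q') : P = P' ∧ Q = Q' := by
  induction h generalizing P' Q' with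
  | nil => cases h'; simp
  | cons _ hi ih =>
    cases h' with
    | cons h' hi' =>
      obtain ⟨rfl, rfl⟩ := ih h'
      exact hi.unique hi'

theorem unique_left (h : Correspondence ρ P Q) (h' : Correspondence σ P Q) : ρ = σ := by
  have hlen : ρ.length = σ.length := by simpa using (h.perm.symm.trans h'.perm).length_eq
  induction h generalizing σ with
  | nil => exact (length_eq_zero_iff.1 hlen.symm).symm
  | cons h hi ih =>
    cases h' with
    | nil => simp at hlen
    | cons h' hi' =>
      rw [length_cons, length_cons, Nat.succ_inj] at hlen
      rw [hlen] at hi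
      obtain ⟨rfl, rfl, rfl⟩ := hi.unique_left hi' (hi.isTableau_left h.isTableau_left)
        (hlen ▸ h.length_succ_notMem) h'.length_succ_notMem
      rw [ih h' hlen]

theorem exists_of_isTableau {n : ℕ} (hP : IsTableau P) (hQ : IsTableau Q)
    (hshape : P.map length = Q.map length) (hred : IsReducedWord (wordOf P))
    (hperm : Q.flatten.Perm (range' 1 n)) : ∃ ρ, ρ.length = n ∧ Correspondence ρ P Q := by
  induction n generalizing P Q with
  | zero =>
    obtain rfl := hQ.eq_nil hperm.eq_nil
    obtain rfl : P = [] := by simpa using hshape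
    exact ⟨[], rfl, .nil⟩
  | succ n ih =>
    have hmem (z : ℕ) : z ∈ Q.flatten ↔ 1 ≤ z ∧ z ≤ n + 1 := by
      rw [hperm.mem_iff, mem_range'_1]
      lia
    obtain ⟨x, k, P₀, Q₀, hP₀, hQ₀, hi⟩ := Insertion.exists_left hP hQ hshape hred
      ((hmem (n + 1)).2 (by simp)) fun z hz => ((hmem z).1 hz).2
    have hperm₀ : Q₀.flatten.Perm (range' 1 n) := by
      rw [range'_one_succ] at hperm
      exact (hi.perm.symm.trans (hperm.trans (perm_append_singleton _ _))).cons_inv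
    have hred₀ : IsReducedWord (wordOf P₀) :=
      (hi.wordEquiv.symm.isReducedWord hred).of_infix (prefix_append _ _).isInfix
    obtain ⟨ρ, rfl, h⟩ := ih hP₀ hQ₀ (hi.map_length_eq_iff.1 hshape) hred₀ hperm₀
    exact ⟨x :: ρ, rfl, h.cons hi⟩

end Correspondence

/-! ## Descents -/

theorem IsReducedWord.ne_of_cons_cons {x y : ℕ} {ρ : List ℕ} (h : IsReducedWord (x :: y :: ρ)) :
    x ≠ y := by
  rintro rfl
  obtain ⟨z, hz, -⟩ := IsReducedWord.exists_mem_near (ρ := [])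
    (h.of_infix (prefix_append [x, x] ρ).isInfix)
  exact not_mem_nil hz

section SplitWhen

variable {brk brk' : ℕ → ℕ → Bool} {l l' : List ℕ}

theorem splitWhen_eq_splitBy (brk : ℕ → ℕ → Bool) (l : List ℕ) :
    splitWhen brk l = l.splitBy fun a b => !brk a b := by
  induction l with
  | nil => rfl
  | cons a l ih =>
    cases l with
    | nil => rfl
    | cons b l =>
      symm
      cases hsplit : splitWhen brk (b :: l) with
      | nil => simp [hsplit] at ih
      | cons r rs =>
        rw [hsplit] at ih
        cases hbrk : brk a b with
        | true =>
          refine (splitBy_append_cons (l := [a]) l (by simpa)).trans ?_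
          rw [← ih, splitBy_of_isChain (by simp) (.singleton a)]
          simp [splitWhen, hsplit, hbrk]
        | false =>
          obtain ⟨hflat, hnil, hr, hrs⟩ := splitBy_eq_iff.1 ih.symm
          obtain ⟨c, r, rfl⟩ := exists_cons_of_ne_nil fun h : r = [] => hnil (by simp [h])
          obtain ⟨rfl, -⟩ : b = c ∧ _ := by simpa using hflat
          simp only [mem_cons, not_or, forall_eq_or_imp] at hnil hr
          simp only [splitWhen, hsplit, hbrk, splitBy_eq_iff]
          exact ⟨by simp [hflat], by simp [hnil.2], by simpa [hbrk] using hr,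
            by simpa [isChain_cons] using hrs⟩

theorem flatten_splitWhen (brk : ℕ → ℕ → Bool) (l : List ℕ) : (splitWhen brk l).flatten = l := by
  rw [splitWhen_eq_splitBy, flatten_splitBy]

theorem nil_notMem_splitWhen (brk : ℕ → ℕ → Bool) (l : List ℕ) : [] ∉ splitWhen brk l := by
  rw [splitWhen_eq_splitBy]
  exact nil_notMem_splitBy _ _

theorem splitWhen_reverse (brk : ℕ → ℕ → Bool) (l : List ℕ) :
    splitWhen brk l.reverse = ((splitWhen (fun a b => brk b a) l).map reverse).reverse := by
  obtain ⟨hflat, hnil, hruns, hbreaks⟩ :=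
    splitBy_eq_iff.1 (splitWhen_eq_splitBy (fun a b => brk b a) l).symm
  rw [splitWhen_eq_splitBy, splitBy_eq_iff]
  refine ⟨?_, by simpa using hnil, fun r hr => ?_, ?_⟩
  · conv_lhs => rw [hflat, reverse_flatten]
  · simpa only [isChain_reverse] using hruns r.reverse (by simpa using hr)
  · rw [isChain_reverse, isChain_map]
    refine hbreaks.imp fun u v ⟨hu, hv, huv⟩ => ?_
    exact ⟨by simpa using hv, by simpa using hu, by simpa using huv⟩

theorem splitWhen_congr (h : l.IsChain fun a b => brk a b = brk' a b) :
    splitWhen brk l = splitWhen brk' l := by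
  induction l with
  | nil => rfl
  | cons a l ih => cases l <;> simp_all [splitWhen]

theorem map_length_splitWhen_cons_cons {a b a' b' : ℕ} (hbrk : brk a b = brk' a' b')
    (h : (splitWhen brk (b :: l)).map length = (splitWhen brk' (b' :: l')).map length) :
    (splitWhen brk (a :: b :: l)).map length = (splitWhen brk' (a' :: b' :: l')).map length := by
  rw [splitWhen, splitWhen, hbrk]
  generalize splitWhen brk (b :: l) = s at h
  generalize splitWhen brk' (b' :: l') = s' at h
  cases s <;> cases s' <;> grind

end SplitWhen

namespace Correspondence

variable {ρ : List ℕ} {P Q : List (List ℕ)}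

theorem map_length_runs (h : Correspondence ρ P Q) (hρ : IsReducedWord ρ) {f : ℕ → ℕ}
    (hf : ∀ z ∈ Q.flatten, f z = rowOf Q z) :
    (runs ρ).map length =
      (splitWhen (fun a b => decide (f a ≤ f b)) (range' 1 ρ.length).reverse).map length := by
  induction h with
  | nil => rfl
  | @cons ρ x k P Q P' Q' h hi ih =>
    have hk : f (ρ.length + 1) = k := by
      rw [hf _ ((h.cons hi).mem_flatten_iff.2 (by simp)), hi.rowOf_self h.length_succ_notMem]
    replace hf : ∀ z ∈ Q.flatten, f z = rowOf Q z := fun z hz => by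
      have hne : z ≠ ρ.length + 1 := fun he => h.length_succ_notMem (he ▸ hz)
      rw [hf z (hi.perm.mem_iff.2 (mem_cons_of_mem _ hz)), hi.rowOf_of_mem hz hne]
    replace ih := ih (hρ.of_infix (suffix_cons x ρ).isInfix) hf
    cases h with
    | nil => rfl
    | @cons ρ y j P₀ Q₀ _ _ h' hi' =>
      have hj : f (ρ.length + 1) = j := by
        rw [hf _ (hi'.perm.mem_iff.2 mem_cons_self), hi'.rowOf_self h'.length_succ_notMem]
      simp only [length_cons, range'_one_succ, reverse_append] at hk ih ⊢
      refine map_length_splitWhen_cons_cons ?_ ih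
      rw [hk, hj, decide_eq_decide]
      rcases lt_or_gt_of_ne hρ.ne_of_cons_cons with hxy | hxy
      · exact iff_of_false hxy.not_ge (hi'.row_lt_of_lt hi hxy).not_ge
      · exact iff_of_true hxy.le (hi'.row_le_of_lt hi hxy)

theorem desComp_eq (h : Correspondence ρ P Q) (hρ : IsReducedWord ρ) {f : ℕ → ℕ}
    (hf : ∀ z ∈ Q.flatten, f z = rowOf Q z) :
    DesComp ρ =
      (splitWhen (fun a _ => decide (f (a + 1) ≤ f a)) (range' 1 ρ.length)).map length := by
  have hcongr : (range' 1 ρ.length).IsChain fun a b =>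
      decide (f b ≤ f a) = decide (f (a + 1) ≤ f a) :=
    (isChain_range' _ _ _).imp fun a b hab => by rw [hab]
  rw [DesComp, rowsOf, map_reverse, h.map_length_runs hρ hf, splitWhen_reverse,
    splitWhen_congr hcongr]
  simp [Function.comp_def]

end Correspondence

/-! ## Transposition -/

section Transpose

variable {α : Type*}

/-- Insert the entries of a list as a new first column, one entry at the front of each row. -/
def consColumn : List α → List (List α) → List (List α)
  | [], C => C
  | a :: r, [] => [a] :: consColumn r []
  | a :: r, c :: C => (a :: c) :: consColumn r C

/-- The transpose of a tableau: its rows become the columns. Unlike the array-based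
`List.transpose`, it unfolds by structural recursion. -/
def transpose : List (List α) → List (List α)
  | [] => []
  | r :: R => consColumn r (transpose R)

theorem consColumn_perm (r : List α) (C : List (List α)) :
    (consColumn r C).flatten.Perm (r ++ C.flatten) := by
  induction r, C using consColumn.induct with
  | case1 => rfl
  | case2 a r ih => simpa [consColumn] using ih
  | case3 a r c C ih =>
    simp only [consColumn, flatten_cons, cons_append]
    exact .cons a ((ih.append_left c).trans (perm_append_comm_assoc _ _ _))

theorem transpose_perm (T : List (List α)) : (transpose T).flatten.Perm T.flatten := by
  induction T with
  | nil => rfl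
  | cons r R ih => exact (consColumn_perm r _).trans (ih.append_left r)

theorem map_length_consColumn_congr {r r' : List α} {C C' : List (List α)}
    (hr : r.length = r'.length) (hC : C.map length = C'.map length) :
    (consColumn r C).map length = (consColumn r' C').map length := by
  induction r, C using consColumn.induct generalizing r' C' <;> cases r' <;> cases C' <;>
    grind [consColumn]

theorem map_length_transpose_congr {T T' : List (List α)} (h : T.map length = T'.map length) :
    (transpose T).map length = (transpose T').map length := by
  induction T generalizing T' <;> cases T' <;> grind [transpose, map_length_consColumn_congr]

theorem transpose_consColumn {r : List α} {C : List (List α)} (hr : r ≠ [])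
    (hC : C.length ≤ r.length) : transpose (consColumn r C) = r :: transpose C := by
  induction r generalizing C with
  | nil => exact absurd rfl hr
  | cons a r ih =>
    rcases eq_or_ne r [] with rfl | hr'
    · rcases C with - | ⟨c, - | ⟨d, C⟩⟩
      · rfl
      · rfl
      · simp at hC
    · cases C <;> simp_all [consColumn, transpose]

end Transpose

/-- The first column of a tableau with nonempty rows (an empty row would contribute `0`). -/
def firstColumn (T : List (List ℕ)) : List ℕ := T.map (·.headD 0)

@[simp, grind =] theorem firstColumn_nil : firstColumn [] = [] := rfl

@[simp, grind =] theorem firstColumn_cons (r : List ℕ) (R : List (List ℕ)) :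
    firstColumn (r :: R) = r.headD 0 :: firstColumn R := rfl

theorem firstColumn_consColumn {r : List ℕ} {C : List (List ℕ)} (h : C.length ≤ r.length) :
    firstColumn (consColumn r C) = r := by
  induction r, C using consColumn.induct <;> simp_all [consColumn]

theorem headD_le_of_mem {r : List ℕ} {z : ℕ} (hr : r.Pairwise (· < ·)) (hz : z ∈ r) :
    r.headD 0 ≤ z := by
  cases r with
  | nil => exact absurd hz not_mem_nil
  | cons a r => exact (mem_cons.1 hz).elim Eq.ge fun hz => ((pairwise_cons.1 hr).1 z hz).le

theorem IsTableau.headD_lt_of_mem_flatten {r : List ℕ} {R : List (List ℕ)} {z : ℕ}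
    (h : IsTableau (r :: R)) (hz : z ∈ R.flatten) : r.headD 0 < z := by
  induction R generalizing r with
  | nil => simp at hz
  | cons s R ih =>
    obtain ⟨a, r, rfl⟩ := exists_cons_of_ne_nil h.1
    obtain ⟨b, s, rfl⟩ := exists_cons_of_ne_nil h.2.2.2.1
    have hab : a < b := h.2.2.1.1
    rcases mem_append.1 hz with hz | hz
    · exact hab.trans_le (headD_le_of_mem h.2.2.2.2.1 hz)
    · exact hab.trans (ih h.2.2.2 hz)

theorem IsTableau.headD_le_of_mem_wordOf {r : List ℕ} {R : List (List ℕ)} {z : ℕ}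
    (h : IsTableau (r :: R)) (hz : z ∈ wordOf (r :: R)) : r.headD 0 ≤ z := by
  rw [wordOf_cons, mem_append] at hz
  rcases hz with hz | hz
  · exact (h.headD_lt_of_mem_flatten (by simpa [wordOf] using hz)).le
  · exact headD_le_of_mem h.2.1 hz

section Column

variable {r : List ℕ} {C : List (List ℕ)}

theorem isTableau_consColumn (hr : r.Pairwise (· < ·)) (hC : IsTableau C)
    (h : RowLT r (firstColumn C)) : IsTableau (consColumn r C) := by
  induction r, C using consColumn.induct with
  | case1 => exact hC
  | case2 a r ih =>
    refine ⟨cons_ne_nil _ _, pairwise_singleton _ _, ?_, ?_⟩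
    · cases r <;> simp_all [consColumn]
    · exact ih hr.of_cons hC (rowLT_nil_right.2 trivial)
  | case3 a r c C ih =>
    refine ⟨cons_ne_nil _ _, ?_, ?_, ih hr.of_cons hC.2.2.2 h.2⟩
    · exact pairwise_cons.2 ⟨fun z hz => h.1.trans_le (headD_le_of_mem hC.2.1 hz), hC.2.1⟩
    · cases r <;> cases C <;> simp_all [consColumn]

theorem wordEquiv_consColumn (hr : r.Pairwise (· < ·)) (hC : IsTableau C)
    (h : RowLT r (firstColumn C)) :
    WordEquiv (wordOf (consColumn r C)) (r.reverse ++ wordOf C) := by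
  induction r, C using consColumn.induct with
  | case1 => exact .refl _
  | case2 a r ih =>
    simpa [consColumn, wordOf_cons] using
      (ih hr.of_cons hC (rowLT_nil_right.2 trivial)).append_right [a]
  | case3 a r c C ih =>
    have hfar : ∀ z ∈ wordOf C, a + 2 ≤ z ∨ z + 2 ≤ a := fun z hz => by
      obtain ⟨d, C, rfl⟩ := exists_cons_of_ne_nil fun h : C = [] => by simp [h] at hz
      obtain ⟨b, r, rfl⟩ := exists_cons_of_ne_nil fun h' : r = [] => by simp [h'] at h
      have hab : a < b := rel_of_pairwise_cons hr mem_cons_self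
      have hbd : b < d.headD 0 := h.2.1
      have hdz : d.headD 0 ≤ z := hC.2.2.2.headD_le_of_mem_wordOf hz
      lia
    have hswap := ((WordEquiv.far_swap hfar).append_left r.reverse).append_right c
    simpa [consColumn, wordOf_cons] using
      ((ih hr.of_cons hC.2.2.2 h.2).append_right (a :: c)).trans (by simpa using hswap)

theorem colOf_cons (r : List ℕ) (R : List (List ℕ)) (z : ℕ) :
    colOf (r :: R) z = if z ∈ r then r.findIdx (· == z) else colOf R z := by
  unfold colOf
  rw [rowOf_cons]
  split_ifs <;> simp

theorem colOf_consColumn_of_mem {z : ℕ} (hz : z ∈ r) (hzC : z ∉ C.flatten) :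
    colOf (consColumn r C) z = 0 := by
  induction r, C using consColumn.induct <;> grind [consColumn, colOf_cons]

theorem colOf_consColumn_of_notMem {z : ℕ} (hz : z ∉ r) (hzC : z ∈ C.flatten)
    (h : C.length ≤ r.length) : colOf (consColumn r C) z = colOf C z + 1 := by
  induction r, C using consColumn.induct <;>
    grind [consColumn, colOf_cons, length_eq_zero_iff, flatten_cons, flatten_nil]

end Column

namespace IsTableau

variable {T : List (List ℕ)}

theorem transpose_and_firstColumn (h : IsTableau T) :
    IsTableau (transpose T) ∧ firstColumn (transpose T) = T.headD [] := by
  induction T with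
  | nil => exact ⟨trivial, rfl⟩
  | cons r R ih =>
    obtain ⟨hR, hcol⟩ := ih h.2.2.2
    have hr := h.2.2.1
    rw [← hcol] at hr
    exact ⟨isTableau_consColumn h.2.1 hR hr,
      firstColumn_consColumn (by simpa [firstColumn] using hr.length_le)⟩

theorem isTableau_transpose (h : IsTableau T) : IsTableau (transpose T) :=
  h.transpose_and_firstColumn.1

theorem rowLT_firstColumn_transpose {r : List ℕ} {R : List (List ℕ)} (h : IsTableau (r :: R)) :
    RowLT r (firstColumn (transpose R)) := by
  rw [h.2.2.2.transpose_and_firstColumn.2]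
  exact h.2.2.1

theorem length_transpose_le {r : List ℕ} {R : List (List ℕ)} (h : IsTableau (r :: R)) :
    (transpose R).length ≤ r.length := by
  simpa [firstColumn] using h.rowLT_firstColumn_transpose.length_le

theorem transpose_transpose (h : IsTableau T) : transpose (transpose T) = T := by
  induction T with
  | nil => rfl
  | cons r R ih =>
    rw [transpose, transpose_consColumn h.1 h.length_transpose_le, ih h.2.2.2]

theorem wordEquiv_transpose (h : IsTableau T) :
    WordEquiv (wordOf (transpose T)) (wordOf T).reverse := by
  induction T with
  | nil => exact .refl _
  | cons r R ih =>
    rw [transpose, wordOf_cons, reverse_append]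
    have hcons :=
      wordEquiv_consColumn h.2.1 h.2.2.2.isTableau_transpose h.rowLT_firstColumn_transpose
    exact hcons.trans ((ih h.2.2.2).append_left r.reverse)

theorem colOf_transpose (h : IsTableau T) (hT : T.flatten.Nodup) {z : ℕ} (hz : z ∈ T.flatten) :
    colOf (transpose T) z = rowOf T z := by
  induction T with
  | nil => exact absurd hz not_mem_nil
  | cons r R ih =>
    rw [flatten_cons, nodup_append] at hT
    rw [transpose, rowOf_cons]
    split_ifs with hzr
    · exact colOf_consColumn_of_mem hzr fun hzR =>
        hT.2.2 z hzr z ((transpose_perm R).mem_iff.1 hzR) rfl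
    · have hzR : z ∈ R.flatten := (mem_append.1 hz).resolve_left hzr
      rw [colOf_consColumn_of_notMem hzr ((transpose_perm R).mem_iff.2 hzR) h.length_transpose_le,
        ih h.2.2.2 hT.2.1 hzR]

end IsTableau

/-! ## Tableaux and their reading words -/

theorem rowLT_iff {r s : List ℕ} :
    RowLT r s ↔ s.length ≤ r.length ∧ ∀ j < s.length, r.getD j 0 < s.getD j 0 := by
  induction s generalizing r with
  | nil => simp
  | cons b s ih =>
    cases r with
    | nil => simp
    | cons a r =>
      rw [rowLT_cons_cons, ih, length_cons, length_cons, Nat.succ_le_succ_iff,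
        Nat.forall_lt_succ_left]
      simp [and_left_comm]

theorem isIncreasingYoungRows_iff {T : List (List ℕ)} :
    IsIncreasingYoungRows T ↔ (∀ r ∈ T, r.Pairwise (· < ·)) ∧ T.IsChain RowLT := by
  simp only [← isChain_iff_pairwise, funext₂ fun r s => propext (rowLT_iff (r := r) (s := s))]
  rfl

theorem isTableau_iff {T : List (List ℕ)} : IsTableau T ↔ IsIncreasingYoungRows T ∧ [] ∉ T := by
  rw [isIncreasingYoungRows_iff]
  induction T with
  | nil => simp
  | cons r R ih => cases R <;> grind

theorem isSYT_iff {T : List (List ℕ)} :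
    IsSYT T ↔ IsTableau T ∧ T.flatten.Perm (range' 1 T.flatten.length) := by
  simp only [isTableau_iff, IsSYT, IsIncreasingYoungRows, and_assoc]

theorem isIncreasingYoungRows_rowsOf_iff {ρ : List ℕ} :
    IsIncreasingYoungRows (rowsOf ρ) ↔ IsTableau (rowsOf ρ) := by
  rw [isTableau_iff, and_iff_left]
  simpa [rowsOf, runs] using nil_notMem_splitWhen _ ρ

theorem wordOf_rowsOf (ρ : List ℕ) : wordOf (rowsOf ρ) = ρ := by
  simp [wordOf, rowsOf, runs, flatten_splitWhen]

theorem rowsOf_wordOf {T : List (List ℕ)} (h : IsTableau T) : rowsOf (wordOf T) = T := by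
  induction T with
  | nil => rfl
  | cons r R ih =>
    have hlast : ∀ a ∈ (wordOf R).getLast?, ∀ b ∈ r.head?, (!decide (b ≤ a)) = false := by
      intro a ha b hb
      obtain ⟨r, rfl⟩ := head?_eq_some_iff.1 hb
      have hba : b < a :=
        h.headD_lt_of_mem_flatten (by simpa [wordOf] using mem_of_mem_getLast? ha)
      simpa using hba.le
    have hr : splitBy (fun a b => !decide (b ≤ a)) r = [r] :=
      splitBy_of_isChain h.1 (by simpa using h.2.1.isChain)
    replace ih := ih h.2.2.2
    rw [rowsOf, runs, splitWhen_eq_splitBy] at ih ⊢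
    rw [wordOf_cons, splitBy_append hlast, hr, reverse_append, ih]
    rfl

/-! ## The expansion -/

theorem finsum_mem_finsum_mem {α β M : Type*} [AddCommMonoid M] (s : Set α) (t : α → Set β)
    (f : α × β → M) (h : {p : α × β | p.1 ∈ s ∧ p.2 ∈ t p.1}.Finite) :
    ∑ᶠ p ∈ {p : α × β | p.1 ∈ s ∧ p.2 ∈ t p.1}, f p = ∑ᶠ a ∈ s, ∑ᶠ b ∈ t a, f (a, b) := by
  have hsum := finsum_mem_finset_product h.toFinset f
  simp only [Set.Finite.mem_toFinset, Set.mem_ofPred_eq] at hsum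
  refine hsum.trans (finsum_congr fun a => ?_)
  by_cases ha : a ∈ s <;> simp [ha]

/-- The pairs `(σ, T)` of a reduced word `σ` for `w` whose descent tableau is an increasing Young
tableau, and a standard Young tableau `T` of shape `Des(σ)`. They index the terms
`F_{Des(T)}` of the expansion of `Σ s_{Des(σ)}`. -/
def wordTableauPairs (w : Equiv.Perm ℕ) : Set (List ℕ × List (List ℕ)) :=
  {p | p.1 ∈ {ρ : List ℕ | ReducedWordFor ρ w ∧ IsIncreasingYoungRows (rowsOf ρ)} ∧
    p.2 ∈ {T : List (List ℕ) | IsSYT T ∧ T.map List.length = DesComp p.1}}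

namespace Correspondence

variable {ρ : List ℕ} {P Q : List (List ℕ)} {w : Equiv.Perm ℕ}

theorem wordEquiv_transpose (h : Correspondence ρ P Q) : WordEquiv ρ (wordOf (transpose P)) := by
  simpa using h.wordEquiv.reverse.trans h.isTableau_left.wordEquiv_transpose.symm

theorem transpose_perm (h : Correspondence ρ P Q) :
    (transpose Q).flatten.Perm (range' 1 ρ.length) :=
  (EG.transpose_perm Q).trans h.perm

theorem length_flatten_transpose (h : Correspondence ρ P Q) :
    (transpose Q).flatten.length = ρ.length := by
  rw [h.transpose_perm.length_eq, length_range']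

theorem desComp_eq_sytDes (h : Correspondence ρ P Q) (hρ : IsReducedWord ρ) :
    DesComp ρ = sytDes (transpose Q) := by
  have hQ : Q.flatten.Nodup := h.perm.nodup_iff.2 nodup_range'
  rw [h.desComp_eq hρ fun z hz => h.isTableau_right.colOf_transpose hQ hz, sytDes,
    h.length_flatten_transpose]

theorem mem_wordTableauPairs (h : Correspondence ρ P Q) (hρ : ReducedWordFor ρ w) :
    (wordOf (transpose P), transpose Q) ∈ wordTableauPairs w := by
  have hP := h.isTableau_left.isTableau_transpose
  refine ⟨⟨⟨h.wordEquiv_transpose.isReducedWord hρ.1, ?_⟩, ?_⟩, ?_, ?_⟩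
  · exact h.wordEquiv_transpose.toPerm_eq.symm.trans hρ.2
  · rwa [isIncreasingYoungRows_rowsOf_iff, rowsOf_wordOf hP]
  · rw [isSYT_iff, h.length_flatten_transpose]
    exact ⟨h.isTableau_right.isTableau_transpose, h.transpose_perm⟩
  · rw [DesComp, rowsOf_wordOf hP, map_length_transpose_congr h.map_length_eq]

end Correspondence

theorem exists_correspondence_of_mem_wordTableauPairs {σ : List ℕ} {T : List (List ℕ)}
    {w : Equiv.Perm ℕ} (h : (σ, T) ∈ wordTableauPairs w) :
    ∃ ρ, ReducedWordFor ρ w ∧ Correspondence ρ (transpose (rowsOf σ)) (transpose T) := by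
  obtain ⟨⟨hσ, hrows⟩, hT, hshape⟩ := h
  rw [isIncreasingYoungRows_rowsOf_iff] at hrows
  rw [isSYT_iff] at hT
  have hred : IsReducedWord (wordOf (transpose (rowsOf σ))) :=
    hrows.wordEquiv_transpose.symm.isReducedWord (by simpa [wordOf_rowsOf] using hσ.1.reverse)
  obtain ⟨ρ, -, h⟩ := Correspondence.exists_of_isTableau hrows.isTableau_transpose
    hT.1.isTableau_transpose (map_length_transpose_congr hshape.symm) hred
    ((transpose_perm T).trans hT.2)
  have hρσ : WordEquiv ρ σ := by
    simpa [hrows.transpose_transpose, wordOf_rowsOf] using h.wordEquiv_transpose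
  exact ⟨ρ, ⟨hρσ.symm.isReducedWord hσ.1, hρσ.toPerm_eq.trans hσ.2⟩, h⟩

theorem exists_bijOn_wordTableauPairs (w : Equiv.Perm ℕ) :
    ∃ Φ : List ℕ → List ℕ × List (List ℕ),
      Set.BijOn Φ {ρ | ReducedWordFor ρ w} (wordTableauPairs w) ∧
        ∀ ρ, ReducedWordFor ρ w → DesComp ρ = sytDes (Φ ρ).2 := by
  choose! P Q hPQ using fun ρ => Correspondence.exists_of_isReducedWord (ρ := ρ)
  refine ⟨fun ρ => (wordOf (transpose (P ρ)), transpose (Q ρ)), ⟨?mapsTo, ?injOn, ?surjOn⟩, ?des⟩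
  case mapsTo => exact fun ρ hρ => (hPQ ρ hρ.1).mem_wordTableauPairs hρ
  case injOn =>
    intro ρ hρ σ hσ heq
    have hρ := hPQ ρ hρ.1
    have hσ := hPQ σ hσ.1
    obtain ⟨hP, hQ⟩ := Prod.mk.inj heq
    replace hP : P ρ = P σ := by
      rw [← hρ.isTableau_left.transpose_transpose, ← hσ.isTableau_left.transpose_transpose,
        ← rowsOf_wordOf hρ.isTableau_left.isTableau_transpose, hP,
        rowsOf_wordOf hσ.isTableau_left.isTableau_transpose]
    replace hQ : Q ρ = Q σ := by
      rw [← hρ.isTableau_right.transpose_transpose, hQ, hσ.isTableau_right.transpose_transpose]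
    exact hρ.unique_left (hP ▸ hQ ▸ hσ)
  case surjOn =>
    rintro ⟨σ, T⟩ hσT
    obtain ⟨ρ, hρ, h⟩ := exists_correspondence_of_mem_wordTableauPairs hσT
    obtain ⟨hP, hQ⟩ := (hPQ ρ hρ.1).unique h
    have hσ := isIncreasingYoungRows_rowsOf_iff.1 hσT.1.2
    have hT := (isSYT_iff.1 hσT.2.1).1
    refine ⟨ρ, hρ, Prod.ext ?_ ?_⟩
    · simp only [hP, hσ.transpose_transpose, wordOf_rowsOf]
    · simp only [hQ, hT.transpose_transpose]
  case des => exact fun ρ hρ => (hPQ ρ hρ.1).desComp_eq_sytDes hρ.1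

/-- For any permutation `w`, the Stanley symmetric function
satisfies `S_w = Σ s_{Des(ρ)}`, the sum over reduced words `ρ ∈ R(w)` whose descent
tableau `𝔻(ρ)` is an increasing Young tableau of partition shape. -/
theorem stanley_schur_expansion (w : Equiv.Perm ℕ) :
    StanleySym w =
      ∑ᶠ ρ ∈ {ρ : List ℕ | ReducedWordFor ρ w ∧ IsIncreasingYoungRows (rowsOf ρ)},
        Schur (DesComp ρ) := by
  obtain ⟨Φ, hΦ, hdes⟩ := exists_bijOn_wordTableauPairs w
  have hfin : (wordTableauPairs w).Finite := hΦ.image_eq ▸ (finite_reducedWords w).image Φ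
  calc
    StanleySym w = ∑ᶠ p ∈ wordTableauPairs w, Fqs (sytDes p.2) :=
      finsum_mem_eq_of_bijOn Φ hΦ fun ρ hρ => congrArg Fqs (hdes ρ hρ)
    _ = ∑ᶠ ρ ∈ {ρ : List ℕ | ReducedWordFor ρ w ∧ IsIncreasingYoungRows (rowsOf ρ)},
        Schur (DesComp ρ) :=
      finsum_mem_finsum_mem {ρ | ReducedWordFor ρ w ∧ IsIncreasingYoungRows (rowsOf ρ)}
        (fun ρ => {T | IsSYT T ∧ T.map List.length = DesComp ρ}) (fun p => Fqs (sytDes p.2)) hfin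

end EG
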